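/- arXiv:1302.1782 — 4 statements merged into one kernel-verified Lean document; each statement's English description precedes it below -/
import Mathlib

section
/- Let 𝒞 be a small category, (−⊗I) elementary homotopy data on Psh(𝒞), and T a monad on Psh(𝒞) satisfying (M1)–(M3). Then there is a (Quillen) model structure on Psh(𝒞) in which the cofibrations are exactly the monomorphisms, the weak equivalences are exactly the T-weak equivalences, and the fibrations are the maps with the right lifting property with respect to all maps that are simultaneously monomorphisms and T-weak equivalences; in this model structure every T-algebra is a fibrant object, and for every presheaf X the unit η_X : X → TX is an acyclic cofibration into a fibrant object, exhibiting TX as a fibrant replacement of X. -/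
open CategoryTheory Category Limits

universe w v u

/-- The category of presheaves on a small category. -/
abbrev Psh (C : Type u) [SmallCategory C] := Cᵒᵖ ⥤ Type u

namespace PaperMSMonad

/-- `f` is a retract of `g` in the arrow category. -/
def IsRetractOf {D : Type*} [Category D] {X Y Z W : D} (f : X ⟶ Y) (g : Z ⟶ W) : Prop :=
  ∃ (i : X ⟶ Z) (r : Z ⟶ X) (i' : Y ⟶ W) (r' : W ⟶ Y),
    i ≫ r = 𝟙 X ∧ i' ≫ r' = 𝟙 Y ∧ i ≫ g = f ≫ i' ∧ g ≫ r' = r ≫ f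

/-- The cocone on the restriction of `F : J ⥤ D` to `Set.Iio j`, with point `F.obj j`. -/
@[simps]
def coconeLT {D : Type*} [Category D] {J : Type w} [Preorder J] (F : J ⥤ D) (j : J) :
    Cocone ((Monotone.functor (f := (Subtype.val : Set.Iio j → J))
      (fun _ _ h => h)) ⋙ F) where
  pt := F.obj j
  ι :=
    { app := fun i => F.map (homOfLE i.2.le)
      naturality := fun i i' g => by
        dsimp [Monotone.functor]
        rw [Category.comp_id, ← F.map_comp]
        rfl }

/-- A morphism property is stable under transfinite composition if, for every well-ordered
type `J`, every functor `F : J ⥤ D` which is continuous at limit stages and whose successor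
maps all lie in `W`, and every colimit cocone on `F`, the component of the cocone at the
bottom element lies in `W`. -/
def StableUnderTransfiniteComposition {D : Type*} [Category D]
    (W : MorphismProperty D) : Prop :=
  ∀ (J : Type w) (_ : LinearOrder J) (_ : SuccOrder J) (_ : OrderBot J) (_ : WellFoundedLT J)
    (F : J ⥤ D),
    (∀ (j : J), ¬IsMax j → W (F.map (homOfLE (Order.le_succ j)))) →
    (∀ (j : J), Order.IsSuccLimit j → Nonempty (IsColimit (coconeLT F j))) →
    ∀ (c : Cocone F), Nonempty (IsColimit c) → W (c.ι.app ⊥)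

/-- A class of morphisms is weakly saturated if it contains all isomorphisms and is closed
under pushout (cobase change), retracts and transfinite composition. -/
def IsWeaklySaturated {D : Type*} [Category D] (W : MorphismProperty D) : Prop :=
  (∀ ⦃X Y : D⦄ (f : X ⟶ Y), IsIso f → W f) ∧
  (∀ ⦃Z X Y P : D⦄ (t : Z ⟶ X) (f : Z ⟶ Y) (g : X ⟶ P) (b : Y ⟶ P),
      IsPushout t f g b → W f → W g) ∧
  (∀ ⦃X Y Z W' : D⦄ (f : X ⟶ Y) (g : Z ⟶ W'), IsRetractOf f g → W g → W f) ∧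
  StableUnderTransfiniteComposition.{w} W

/-- The saturated class generated by `S`: the smallest weakly saturated class containing `S`. -/
def SaturatedClassGen {D : Type*} [Category D] (S : MorphismProperty D) :
    MorphismProperty D :=
  fun _ _ f => ∀ W : MorphismProperty D, IsWeaklySaturated.{w} W → S ≤ W → W f

/-- The maps having the right lifting property with respect to all maps in `S`. -/
def RLP {D : Type*} [Category D] (S : MorphismProperty D) : MorphismProperty D :=
  fun _ _ g => ∀ ⦃A B : D⦄ (f : A ⟶ B), S f → HasLiftingProperty f g

/-- The maps having the left lifting property with respect to all maps in `S`. -/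
def LLP {D : Type*} [Category D] (S : MorphismProperty D) : MorphismProperty D :=
  fun _ _ f => ∀ ⦃A B : D⦄ (g : A ⟶ B), S g → HasLiftingProperty f g

end PaperMSMonad

namespace PaperMSMonad

variable {C : Type u} [SmallCategory C]

/-- Elementary homotopy data on the category of presheaves on `C`: a functorial cylinder
`X ↦ X ⊗ I` with endpoint inclusions `∂⁰`, `∂¹` and projection `σ`, such that
`[∂⁰,∂¹] : X + X → X ⊗ I` is always a monomorphism, the cylinder functor preserves small
colimits and monomorphisms, and the endpoint naturality squares at monomorphisms
are pullbacks. -/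
structure ElementaryHomotopyData (C : Type u) [SmallCategory C] where
  cyl : Psh C ⥤ Psh C
  d0 : 𝟭 (Psh C) ⟶ cyl
  d1 : 𝟭 (Psh C) ⟶ cyl
  σ : cyl ⟶ 𝟭 (Psh C)
  d0_σ : ∀ X : Psh C, d0.app X ≫ σ.app X = 𝟙 X
  d1_σ : ∀ X : Psh C, d1.app X ≫ σ.app X = 𝟙 X
  mono_pair : ∀ X : Psh C, Mono (coprod.desc (d0.app X) (d1.app X))
  preservesColimits : PreservesColimitsOfSize.{u, u} cyl
  preservesMono : ∀ ⦃K L : Psh C⦄ (j : K ⟶ L), Mono j → Mono (cyl.map j)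
  isPullback0 : ∀ ⦃K L : Psh C⦄ (j : K ⟶ L), Mono j →
    IsPullback j (d0.app K) (d0.app L) (cyl.map j)
  isPullback1 : ∀ ⦃K L : Psh C⦄ (j : K ⟶ L), Mono j →
    IsPullback j (d1.app K) (d1.app L) (cyl.map j)

namespace ElementaryHomotopyData

variable (E : ElementaryHomotopyData C)

/-- `f ≃ g`: there is a homotopy `θ : X ⊗ I ⟶ Y` from `f` to `g`. -/
def Htpy {X Y : Psh C} (f g : X ⟶ Y) : Prop :=
  ∃ θ : E.cyl.obj X ⟶ Y, E.d0.app X ≫ θ = f ∧ E.d1.app X ≫ θ = g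

/-- `f ≃* g`: the equivalence relation generated by the homotopy relation. -/
def HtpyStar {X Y : Psh C} (f g : X ⟶ Y) : Prop :=
  Relation.EqvGen (fun a b : X ⟶ Y => E.Htpy a b) f g

/-- `[X,Y]`: the quotient of `Hom(X,Y)` by the equivalence relation generated by homotopy. -/
def HQ (X Y : Psh C) :=
  Quot (fun a b : X ⟶ Y => E.Htpy a b)

/-- The class of `f : X ⟶ Y` in `[X,Y]`. -/
def HQ.mk {X Y : Psh C} (f : X ⟶ Y) : E.HQ X Y :=
  Quot.mk _ f

/-- `[f,A] : [Y,A] → [X,A]`, precomposition with `f` on homotopy classes. -/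
def precomp {X Y A : Psh C} (f : X ⟶ Y) : E.HQ Y A → E.HQ X A :=
  Quot.lift (fun h => HQ.mk E (f ≫ h)) (fun h h' hh => Quot.sound (by
    obtain ⟨θ, h0, h1⟩ := hh
    exact ⟨E.cyl.map f ≫ θ,
      by rw [← Category.assoc, ← E.d0.naturality, Functor.id_map, Category.assoc, h0],
      by rw [← Category.assoc, ← E.d1.naturality, Functor.id_map, Category.assoc, h1]⟩))

/-- For a monomorphism `j : K ⟶ L` the canonical map `K⊗I ∪ L⊗{0} ⟶ L⊗I`. -/
noncomputable def gluing0 {K L : Psh C} (j : K ⟶ L) :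
    pushout (E.d0.app K) j ⟶ E.cyl.obj L :=
  pushout.desc (E.cyl.map j) (E.d0.app L) (by rw [← E.d0.naturality j]; rfl)

/-- For a monomorphism `j : K ⟶ L` the canonical map `K⊗I ∪ L⊗{1} ⟶ L⊗I`. -/
noncomputable def gluing1 {K L : Psh C} (j : K ⟶ L) :
    pushout (E.d1.app K) j ⟶ E.cyl.obj L :=
  pushout.desc (E.cyl.map j) (E.d1.app L) (by rw [← E.d1.naturality j]; rfl)

/-- For a map `j : K ⟶ L` the canonical map `K⊗I ∪ L⊗∂I ⟶ L⊗I`. -/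
noncomputable def gluingBoth {K L : Psh C} (j : K ⟶ L) :
    pushout (coprod.desc (E.d0.app K) (E.d1.app K)) (coprod.map j j) ⟶ E.cyl.obj L :=
  pushout.desc (E.cyl.map j) (coprod.desc (E.d0.app L) (E.d1.app L)) (by
    apply coprod.hom_ext
    · rw [coprod.inl_desc_assoc, coprod.inl_map_assoc, coprod.inl_desc]
      exact (E.d0.naturality j).symm
    · rw [coprod.inr_desc_assoc, coprod.inr_map_assoc, coprod.inr_desc]
      exact (E.d1.naturality j).symm)

/-- The class `Λ⁰_I(S)`. -/
inductive Lambda0 (E : ElementaryHomotopyData C) (S : MorphismProperty (Psh C)) :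
    ∀ ⦃X Y : Psh C⦄, (X ⟶ Y) → Prop
  | ofS ⦃X Y : Psh C⦄ (f : X ⟶ Y) : S f → Lambda0 E S f
  | glue0 ⦃K L : Psh C⦄ (j : K ⟶ L) : Mono j → Lambda0 E S (E.gluing0 j)
  | glue1 ⦃K L : Psh C⦄ (j : K ⟶ L) : Mono j → Lambda0 E S (E.gluing1 j)

/-- The operation `𝚲(-)` applied to a class of maps. -/
inductive LambdaStep (E : ElementaryHomotopyData C) (P : MorphismProperty (Psh C)) :
    ∀ ⦃X Y : Psh C⦄, (X ⟶ Y) → Prop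
  | glue ⦃K L : Psh C⦄ (j : K ⟶ L) : P j → LambdaStep E P (E.gluingBoth j)

/-- The class `Λⁿ_I(S)`. -/
def LambdaN (S : MorphismProperty (Psh C)) : ℕ → MorphismProperty (Psh C)
  | 0 => Lambda0 E S
  | (n + 1) => LambdaStep E (LambdaN S n)

/-- The class `Λ_I(S) = ⋃ₙ Λⁿ_I(S)`. -/
def Lambda (S : MorphismProperty (Psh C)) : MorphismProperty (Psh C) :=
  fun _ _ f => ∃ n : ℕ, LambdaN E S n f

/-- The class `𝔄_I(S)` of anodyne extensions: maps with the left lifting property with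
respect to every map having the right lifting property with respect to `Λ_I(S)`. -/
def Anodyne (S : MorphismProperty (Psh C)) : MorphismProperty (Psh C) :=
  LLP (RLP (E.Lambda S))

/-- `A` is naively fibrant if `A ⟶ 1` has the right lifting property with respect to all
anodyne extensions. -/
def NaivelyFibrant (S : MorphismProperty (Psh C)) (A : Psh C) : Prop :=
  RLP (E.Anodyne S) (terminal.from A)

/-- A map `f : X ⟶ Y` is a `T`-weak equivalence if `[f,A] : [Y,A] → [X,A]` is a bijection
for every `T`-algebra `A`. -/
def TWeakEquiv (T : Monad (Psh C)) : MorphismProperty (Psh C) :=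
  fun _ _ f => ∀ A : T.Algebra, Function.Bijective (E.precomp (A := A.A) f)

end ElementaryHomotopyData

/-- The generating set of units `𝔊 = {η_{Gⁱ} : Gⁱ ⟶ T(Gⁱ)}`. -/
inductive unitsOf (T : Monad (Psh C)) {ι : Type u} (G : ι → Psh C) :
    ∀ ⦃X Y : Psh C⦄, (X ⟶ Y) → Prop
  | mk (i : ι) : unitsOf T G (T.η.app (G i))

end PaperMSMonad

namespace PaperMSMonad

open CategoryTheory Category Limits

/-- A pair of classes `(L, R)` forms a weak factorization system. -/
structure IsWFS {D : Type*} [Category D] (L R : MorphismProperty D) : Prop where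
  lift : ∀ ⦃A B X Y : D⦄ (f : A ⟶ B) (g : X ⟶ Y), L f → R g → HasLiftingProperty f g
  llp : ∀ ⦃A B : D⦄ (f : A ⟶ B),
    (∀ ⦃X Y : D⦄ (g : X ⟶ Y), R g → HasLiftingProperty f g) → L f
  rlp : ∀ ⦃X Y : D⦄ (g : X ⟶ Y),
    (∀ ⦃A B : D⦄ (f : A ⟶ B), L f → HasLiftingProperty f g) → R g
  fact : ∀ ⦃X Y : D⦄ (f : X ⟶ Y),
    ∃ (Z : D) (i : X ⟶ Z) (p : Z ⟶ Y), L i ∧ R p ∧ i ≫ p = f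

/-- `(W, Cof, Fib)` is a (Quillen) model structure: `W` satisfies two-out-of-three, and
`(Cof ∩ W, Fib)` and `(Cof, Fib ∩ W)` are weak factorization systems. -/
structure IsModelStructure {D : Type*} [Category D]
    (W Cof Fib : MorphismProperty D) : Prop where
  weq_comp : ∀ ⦃X Y Z : D⦄ (f : X ⟶ Y) (g : Y ⟶ Z), W f → W g → W (f ≫ g)
  weq_of_postcomp : ∀ ⦃X Y Z : D⦄ (f : X ⟶ Y) (g : Y ⟶ Z), W g → W (f ≫ g) → W f
  weq_of_precomp : ∀ ⦃X Y Z : D⦄ (f : X ⟶ Y) (g : Y ⟶ Z), W f → W (f ≫ g) → W g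
  wfs_trivCof_fib : IsWFS (Cof ⊓ W) Fib
  wfs_cof_trivFib : IsWFS Cof (Fib ⊓ W)

section Generic
variable {D : Type*} [Category D]

lemma LLP_isWeaklySaturated (S : MorphismProperty D) : IsWeaklySaturated.{w} (LLP S) := by
  refine ⟨?_, ?_, ?_, ?_⟩
  · intro X Y f hf A B g _
    infer_instance
  · intro Z X Y P t f g b sq hf A B q hq
    have := hf q hq
    exact sq.hasLiftingProperty q
  · rintro X Y Z W f g ⟨i, r, i', r', h1, h2, h3, h4⟩ hg A B q hq
    have := hg q hq
    constructor
    intro a b sq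
    have sq' : CommSq (r ≫ a) g q (r' ≫ b) := ⟨by rw [assoc, sq.w, ← assoc, ← h4, assoc]⟩
    exact ⟨⟨⟨i' ≫ sq'.lift, by rw [← assoc, ← h3, assoc, sq'.fac_left, ← assoc, h1, id_comp],
      by rw [assoc, sq'.fac_right, ← assoc, h2, id_comp]⟩⟩⟩
  · intro J _ _ _ _ F h1 h2 c ⟨hc⟩ A B q hq
    have : F.IsWellOrderContinuous := ⟨fun m hm => h2 m hm⟩
    exact HasLiftingProperty.transfiniteComposition.hasLiftingProperty_ι_app_bot hc
      (fun j hj => h1 j hj q hq)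

lemma hlp_of_forall {A B X Y : D} {i : A ⟶ B} {p : X ⟶ Y}
    (h : ∀ (u : A ⟶ X) (v : B ⟶ Y), u ≫ p = i ≫ v → ∃ l : B ⟶ X, i ≫ l = u ∧ l ≫ p = v) :
    HasLiftingProperty i p :=
  ⟨fun {u v} sq => by
    obtain ⟨l, h1, h2⟩ := h u v sq.w
    exact ⟨⟨⟨l, h1, h2⟩⟩⟩⟩

lemma hlp_lift {A B X Y : D} {i : A ⟶ B} {p : X ⟶ Y} (h : HasLiftingProperty i p)
    (u : A ⟶ X) (v : B ⟶ Y) (w : u ≫ p = i ≫ v) : ∃ l : B ⟶ X, i ≫ l = u ∧ l ≫ p = v := by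
  have sq : CommSq u i p v := ⟨w⟩
  exact ⟨sq.lift, sq.fac_left, sq.fac_right⟩

end Generic

section Zorn

variable {C : Type u} [SmallCategory C]

lemma psh_hom_ext {X Y : Psh C} {f g : X ⟶ Y}
    (h : ∀ (c : Cᵒᵖ) (x : X.obj c), f.app c x = g.app c x) : f = g := by
  ext c x
  exact h c x

lemma psh_nat {X Y : Psh C} (f : X ⟶ Y) {c d : Cᵒᵖ} (g : c ⟶ d) (x : X.obj c) :
    f.app d (X.map g x) = Y.map g (f.app c x) :=
  NatTrans.naturality_apply f g x

/-- Constructor for maps of presheaves. -/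
def pshHom {X Y : Psh C} (φ : ∀ c, X.obj c → Y.obj c)
    (h : ∀ c d (g : c ⟶ d) (x : X.obj c), φ d (X.map g x) = Y.map g (φ c x)) : X ⟶ Y where
  app c := ↾(φ c)
  naturality c d g := by
    ext x
    exact h c d g x

lemma psh_mono_iff {X Y : Psh C} (f : X ⟶ Y) :
    Mono f ↔ ∀ c, Function.Injective (f.app c) := by
  rw [NatTrans.mono_iff_mono_app]
  exact forall_congr' fun c => mono_iff_injective _

lemma hlp_range_ι {A B X Y : Psh C} (i : A ⟶ B) [Mono i] (p : X ⟶ Y) :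
    HasLiftingProperty (Subfunctor.range i).ι p ↔ HasLiftingProperty i p := by
  have e : Arrow.mk i ≅ Arrow.mk (Subfunctor.range i).ι :=
    Arrow.isoMk (asIso (Subfunctor.toRange i)) (Iso.refl _) (by simp)
  exact ⟨fun h => HasLiftingProperty.of_arrow_iso_left e.symm p,
    fun h => HasLiftingProperty.of_arrow_iso_left e p⟩

/-- Gluing a partially defined map along a cell. -/
lemma glue_cell {L B X : Psh C} (M : Subfunctor L) (f : B ⟶ L)
    (hinj : ∀ c (b b' : B.obj c), f.app c b = f.app c b' → f.app c b ∉ M.obj c → b = b')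
    (l : M.toFunctor ⟶ X) (w : B ⟶ X)
    (hw : ∀ c (b : B.obj c) (hb : f.app c b ∈ M.obj c), w.app c b = l.app c ⟨_, hb⟩) :
    ∃ l' : (M ⊔ Subfunctor.range f).toFunctor ⟶ X,
      (∀ c (x : L.obj c) (hx : x ∈ M.obj c), l'.app c ⟨x, Or.inl hx⟩ = l.app c ⟨x, hx⟩) ∧
      (∀ c (b : B.obj c), l'.app c ⟨f.app c b, Or.inr ⟨b, rfl⟩⟩ = w.app c b) := by
  classical
  have key : ∀ c (z : (M ⊔ Subfunctor.range f).toFunctor.obj c), ∃ y : X.obj c,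
      (∀ hx : z.1 ∈ M.obj c, y = l.app c ⟨z.1, hx⟩) ∧
      (∀ b, f.app c b = z.1 → y = w.app c b) := by
    rintro c ⟨z, hz⟩
    by_cases h : z ∈ M.obj c
    · refine ⟨l.app c ⟨z, h⟩, fun _ => rfl, ?_⟩
      rintro b rfl
      exact (hw c b h).symm
    · obtain ⟨b, rfl⟩ := hz.resolve_left h
      refine ⟨w.app c b, fun hx => absurd hx h, fun b' hb' => ?_⟩
      rw [hinj c b b' hb'.symm h]
  choose φ h1 h2 using key
  refine ⟨pshHom φ ?_, ?_, ?_⟩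
  · rintro c d g ⟨z, hz⟩
    rcases hz with hz | ⟨b, rfl⟩
    · exact (h1 d ((M ⊔ Subfunctor.range f).toFunctor.map g ⟨z, Or.inl hz⟩) (M.map g hz)).trans ((psh_nat l g ⟨z, hz⟩).trans
        (congr_arg (X.map g) (h1 c ⟨z, Or.inl hz⟩ hz)).symm)
    · exact (h2 d _ (B.map g b) (psh_nat f g b)).trans ((psh_nat w g b).trans
        (congr_arg (X.map g) (h2 c ⟨f.app c b, Or.inr ⟨b, rfl⟩⟩ b rfl)).symm)
  · intro c x hx
    exact h1 c ⟨x, Or.inl hx⟩ hx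
  · intro c b
    exact h2 c ⟨f.app c b, _⟩ b rfl

/-- Partial lifts. -/
structure PLift {L X Y : Psh C} (p : X ⟶ Y) (v : L ⟶ Y) (𝒢 : Set (Subfunctor L))
    (M₀ : Subfunctor L) (l₀ : M₀.toFunctor ⟶ X) where
  M : Subfunctor L
  mem : M ∈ 𝒢
  l : M.toFunctor ⟶ X
  w : l ≫ p = M.ι ≫ v
  le : M₀ ≤ M
  ext : Subfunctor.homOfLe le ≫ l = l₀

lemma zorn_lift {L X Y : Psh C} (p : X ⟶ Y) (𝒢 : Set (Subfunctor L))
    (hchain : ∀ S : Set (Subfunctor L), S.Nonempty → S ⊆ 𝒢 → sSup S ∈ 𝒢)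
    (hext : ∀ M ∈ 𝒢, M ≠ ⊤ → ∃ (B : Psh C) (A : Subfunctor B) (f : B ⟶ L),
      HasLiftingProperty A.ι p ∧ (∀ c (b : B.obj c), b ∈ A.obj c ↔ f.app c b ∈ M.obj c) ∧
      (∀ c (b b' : B.obj c), f.app c b = f.app c b' → f.app c b ∉ M.obj c → b = b') ∧
      M ⊔ Subfunctor.range f ∈ 𝒢 ∧ ¬ (Subfunctor.range f ≤ M))
    (M₀ : Subfunctor L) (hM₀ : M₀ ∈ 𝒢) : HasLiftingProperty M₀.ι p := by
  apply hlp_of_forall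
  intro l₀ v hlv
  let r : PLift p v 𝒢 M₀ l₀ → PLift p v 𝒢 M₀ l₀ → Prop := fun a b =>
    ∃ h : a.M ≤ b.M, Subfunctor.homOfLe h ≫ b.l = a.l
  have : Nonempty (PLift p v 𝒢 M₀ l₀) := ⟨⟨M₀, hM₀, l₀, hlv, le_rfl, by
    apply psh_hom_ext; intros; rfl⟩⟩
  obtain ⟨m, hm⟩ := exists_maximal_of_nonempty_chains_bounded (r := r) (by
    intro S hS hne
    have key : ∀ c (z : (sSup (PLift.M '' S)).toFunctor.obj c), ∃ y : X.obj c,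
        ∀ a ∈ S, ∀ hz : z.1 ∈ a.M.obj c, y = a.l.app c ⟨z.1, hz⟩ := by
      rintro c ⟨z, hz⟩
      obtain ⟨_, ⟨_, ⟨a, ha, rfl⟩, rfl⟩, hza⟩ := hz
      refine ⟨a.l.app c ⟨z, hza⟩, fun b hb hzb => ?_⟩
      rcases eq_or_ne a b with rfl | hab
      · rfl
      rcases hS ha hb hab with ⟨h, e⟩ | ⟨h, e⟩
      · rw [← e]; rfl
      · change _ = b.l.app c ⟨z, hzb⟩
        rw [← e]; rfl
    choose φ hφ using key
    have hmem : ∀ c (z : (sSup (PLift.M '' S)).toFunctor.obj c), ∃ a ∈ S, z.1 ∈ a.M.obj c := by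
      rintro c ⟨z, hz⟩
      obtain ⟨_, ⟨_, ⟨a, ha, rfl⟩, rfl⟩, hza⟩ := hz
      exact ⟨a, ha, hza⟩
    have hle : ∀ a ∈ S, a.M ≤ sSup (PLift.M '' S) := fun a ha => le_sSup ⟨a, ha, rfl⟩
    refine ⟨⟨sSup (PLift.M '' S), hchain _ (hne.image _) ?_,
      pshHom φ ?_, ?_, ?_, ?_⟩, ?_⟩
    · rintro _ ⟨a, _, rfl⟩
      exact a.mem
    · intro c d g z
      obtain ⟨a, ha, hz⟩ := hmem c z
      exact (hφ d ((sSup (PLift.M '' S)).toFunctor.map g z) a ha (a.M.map g hz)).trans ((psh_nat a.l g ⟨z.1, hz⟩).trans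
        (congr_arg (X.map g) (hφ c z a ha hz)).symm)
    · apply psh_hom_ext
      intro c z
      obtain ⟨a, ha, hz⟩ := hmem c z
      exact (congr_arg (p.app c) (hφ c z a ha hz)).trans
        (congr_arg (fun t => t.app c ⟨z.1, hz⟩) a.w)
    · obtain ⟨a, ha⟩ := hne
      exact a.le.trans (hle a ha)
    · obtain ⟨a, ha⟩ := hne
      refine Eq.trans ?_ a.ext
      apply psh_hom_ext
      intro c z
      exact hφ c ⟨z.1, _⟩ a ha (a.le c z.2)
    · intro a ha
      refine ⟨hle a ha, ?_⟩
      apply psh_hom_ext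
      intro c z
      exact hφ c ⟨z.1, _⟩ a ha z.2)
    (by
      rintro a b c ⟨h, e⟩ ⟨h', e'⟩
      refine ⟨h.trans h', ?_⟩
      rw [← e, ← e']
      rfl)
  by_cases htop : m.M = ⊤
  · have hall : ∀ c (x : L.obj c), x ∈ m.M.obj c := by
      intro c x
      rw [htop]
      trivial
    have := (Subfunctor.eq_top_iff_isIso m.M).1 htop
    refine ⟨inv m.M.ι ≫ m.l, ?_, ?_⟩
    · refine Eq.trans ?_ m.ext
      rw [← Subfunctor.homOfLe_ι m.le, assoc, IsIso.hom_inv_id_assoc]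
    · rw [assoc, m.w, IsIso.inv_hom_id_assoc]
  · exfalso
    obtain ⟨B, A, f, hA, hAf, hinj, hG, hnle⟩ := hext m.M m.mem htop
    let t : A.toFunctor ⟶ m.M.toFunctor := Subfunctor.lift (A.ι ≫ f) (by
      rintro c _ ⟨b, rfl⟩
      exact (hAf c b.1).1 b.2)
    have ht : t ≫ m.M.ι = A.ι ≫ f := rfl
    obtain ⟨w, hw1, hw2⟩ := hlp_lift hA (t ≫ m.l) (f ≫ v) (by
      rw [assoc, m.w, ← assoc, ht, assoc])
    obtain ⟨l', hl1, hl2⟩ := glue_cell m.M f hinj m.l w (by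
      intro c b hb
      exact congr_arg (fun t => t.app c ⟨b, (hAf c b).2 hb⟩) hw1)
    let m' : PLift p v 𝒢 M₀ l₀ := ⟨_, hG, l', by
      apply psh_hom_ext
      rintro c ⟨z, hz | ⟨b, rfl⟩⟩
      · exact (congr_arg (p.app c) (hl1 c z hz)).trans
          (congr_arg (fun t => t.app c ⟨z, hz⟩) m.w)
      · exact (congr_arg (p.app c) (hl2 c b)).trans (congr_arg (fun t => t.app c b) hw2), m.le.trans le_sup_left, by
      refine Eq.trans ?_ m.ext
      apply psh_hom_ext
      intro c z
      exact hl1 c z.1 _⟩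
    obtain ⟨h, _⟩ := hm m' ⟨le_sup_left, by
      apply psh_hom_ext
      intro c z
      exact hl1 c z.1 _⟩
    exact hnle (le_sup_right.trans h)

end Zorn

section Terms

/-- A small family of subobject inclusions. -/
structure Cells (C : Type u) [SmallCategory C] where
  J : Type u
  B : J → Psh C
  A : ∀ j, Subfunctor (B j)

variable {C : Type u} [SmallCategory C]

/-- Pre-terms: formal iterated cell attachments. -/
inductive PT (S : Cells C) (Y X : Psh C) : Cᵒᵖ → Type u
  | inj {c : Cᵒᵖ} (x : X.obj c) : PT S Y X c
  | fill {c : Cᵒᵖ} (j : S.J) (v : S.B j ⟶ Y) (u : ∀ d, (S.A j).obj d → PT S Y X d)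
      (y : (S.B j).obj c) (hy : y ∉ (S.A j).obj c) : PT S Y X c

namespace PT

variable {S : Cells C} {X Y : Psh C}

open Classical in
/-- Value of the cell map of a pre-cell. -/
noncomputable def cell (j : S.J) (v : S.B j ⟶ Y) (u : ∀ d, (S.A j).obj d → PT S Y X d) (c : Cᵒᵖ)
    (y : (S.B j).obj c) : PT S Y X c :=
  if h : y ∈ (S.A j).obj c then u c ⟨y, h⟩ else fill j v u y h

lemma cell_mem (j : S.J) (v : S.B j ⟶ Y) (u : ∀ d, (S.A j).obj d → PT S Y X d) (c : Cᵒᵖ)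
    (y : (S.B j).obj c) (h : y ∈ (S.A j).obj c) : cell j v u c y = u c ⟨y, h⟩ := dif_pos h

lemma cell_not_mem (j : S.J) (v : S.B j ⟶ Y) (u : ∀ d, (S.A j).obj d → PT S Y X d) (c : Cᵒᵖ)
    (y : (S.B j).obj c) (h : y ∉ (S.A j).obj c) : cell j v u c y = fill j v u y h := dif_neg h

/-- Restriction of pre-terms. -/
noncomputable def res {c d : Cᵒᵖ} (g : c ⟶ d) : PT S Y X c → PT S Y X d
  | inj x => inj (X.map g x)
  | fill j v u y _ => cell j v u d ((S.B j).map g y)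

/-- Projection of pre-terms to the base. -/
def toBase (f : X ⟶ Y) {c : Cᵒᵖ} : PT S Y X c → Y.obj c
  | inj x => f.app c x
  | fill _ v _ y _ => v.app c y

/-- Well-formed terms. -/
def Good (f : X ⟶ Y) : ∀ {c : Cᵒᵖ}, PT S Y X c → Prop
  | _, inj _ => True
  | _, fill j v u _ _ => (∀ d a, Good f (u d a)) ∧
      (∀ d e (g : d ⟶ e) (a : (S.A j).obj d),
        u e ⟨(S.B j).map g a.1, (S.A j).map g a.2⟩ = res g (u d a)) ∧
      (∀ d (a : (S.A j).obj d), toBase f (u d a) = v.app d a.1)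

/-- Boundary data for a cell. -/
def Bd (f : X ⟶ Y) (j : S.J) (v : S.B j ⟶ Y) (u : ∀ d, (S.A j).obj d → PT S Y X d) : Prop :=
  (∀ d a, Good f (u d a)) ∧
      (∀ d e (g : d ⟶ e) (a : (S.A j).obj d),
        u e ⟨(S.B j).map g a.1, (S.A j).map g a.2⟩ = res g (u d a)) ∧
      (∀ d (a : (S.A j).obj d), toBase f (u d a) = v.app d a.1)

lemma good_fill_iff (f : X ⟶ Y) {c : Cᵒᵖ} (j : S.J) (v : S.B j ⟶ Y)
    (u : ∀ d, (S.A j).obj d → PT S Y X d) (y : (S.B j).obj c) (hy) :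
    Good f (fill j v u y hy) ↔ Bd f j v u := by
  rw [Good]
  exact Iff.rfl

lemma good_cell {f : X ⟶ Y} {j : S.J} {v : S.B j ⟶ Y} {u : ∀ d, (S.A j).obj d → PT S Y X d}
    (h : Bd f j v u) (c : Cᵒᵖ) (y : (S.B j).obj c) : Good f (cell j v u c y) := by
  by_cases hy : y ∈ (S.A j).obj c
  · rw [cell_mem _ _ _ _ _ hy]
    exact h.1 _ _
  · rw [cell_not_mem _ _ _ _ _ hy, good_fill_iff]
    exact h

lemma res_cell {f : X ⟶ Y} {j : S.J} {v : S.B j ⟶ Y} {u : ∀ d, (S.A j).obj d → PT S Y X d}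
    (h : Bd f j v u) {c d : Cᵒᵖ} (g : c ⟶ d) (y : (S.B j).obj c) :
    res g (cell j v u c y) = cell j v u d ((S.B j).map g y) := by
  by_cases hy : y ∈ (S.A j).obj c
  · rw [cell_mem _ _ _ _ _ hy, cell_mem _ _ _ _ _ ((S.A j).map g hy)]
    exact (h.2.1 c d g ⟨y, hy⟩).symm
  · rw [cell_not_mem _ _ _ _ _ hy]
    rfl

lemma toBase_cell {f : X ⟶ Y} {j : S.J} {v : S.B j ⟶ Y} {u : ∀ d, (S.A j).obj d → PT S Y X d}
    (h : Bd f j v u) (c : Cᵒᵖ) (y : (S.B j).obj c) : toBase f (cell j v u c y) = v.app c y := by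
  by_cases hy : y ∈ (S.A j).obj c
  · rw [cell_mem _ _ _ _ _ hy]
    exact h.2.2 c ⟨y, hy⟩
  · rw [cell_not_mem _ _ _ _ _ hy]
    rfl

lemma good_res {f : X ⟶ Y} {c d : Cᵒᵖ} (g : c ⟶ d) (t : PT S Y X c) (h : Good f t) :
    Good f (res g t) := by
  cases t with
  | inj x => simp [res, Good]
  | fill j v u y hy =>
    rw [good_fill_iff] at h
    exact good_cell h _ _

lemma res_id {c : Cᵒᵖ} (t : PT S Y X c) : res (𝟙 c) t = t := by
  cases t with
  | inj x => simp [res]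
  | fill j v u y hy =>
    change cell j v u c ((S.B j).map (𝟙 c) y) = _
    have : (S.B j).map (𝟙 c) y = y := by simp
    rw [this, cell_not_mem _ _ _ _ _ hy]

lemma res_comp {f : X ⟶ Y} {c d e : Cᵒᵖ} (g : c ⟶ d) (k : d ⟶ e) (t : PT S Y X c)
    (h : Good f t) : res (g ≫ k) t = res k (res g t) := by
  cases t with
  | inj x => simp [res]
  | fill j v u y hy =>
    rw [good_fill_iff] at h
    change cell j v u e ((S.B j).map (g ≫ k) y) = res k (cell j v u d ((S.B j).map g y))
    rw [res_cell h]
    congr 1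
    simp

lemma toBase_res {f : X ⟶ Y} {c d : Cᵒᵖ} (g : c ⟶ d) (t : PT S Y X c) (h : Good f t) :
    toBase f (res g t) = Y.map g (toBase f t) := by
  cases t with
  | inj x => exact psh_nat f g x
  | fill j v u y hy =>
    rw [good_fill_iff] at h
    change toBase f (cell j v u d ((S.B j).map g y)) = _
    rw [toBase_cell h]
    exact psh_nat v g y

/-- Functoriality of pre-terms. -/
def map {X' : Psh C} (m : X ⟶ X') : ∀ {c : Cᵒᵖ}, PT S Y X c → PT S Y X' c
  | c, inj x => inj (m.app c x)
  | _, fill j v u y hy => fill j v (fun d a => map m (u d a)) y hy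

variable {X' X'' : Psh C}

lemma map_cell (m : X ⟶ X') (j : S.J) (v : S.B j ⟶ Y) (u : ∀ d, (S.A j).obj d → PT S Y X d)
    (c : Cᵒᵖ) (y : (S.B j).obj c) :
    map m (cell j v u c y) = cell j v (fun d a => map m (u d a)) c y := by
  by_cases hy : y ∈ (S.A j).obj c
  · rw [cell_mem _ _ _ _ _ hy, cell_mem _ _ _ _ _ hy]
  · rw [cell_not_mem _ _ _ _ _ hy, cell_not_mem _ _ _ _ _ hy, map]

lemma map_res (m : X ⟶ X') {c d : Cᵒᵖ} (g : c ⟶ d) (t : PT S Y X c) :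
    map m (res g t) = res g (map m t) := by
  cases t with
  | inj x =>
    simp only [res, map]
    rw [psh_nat]
  | fill j v u y hy =>
    rw [res, map_cell, map, res]

lemma map_toBase (m : X ⟶ X') (f' : X' ⟶ Y) {c : Cᵒᵖ} (t : PT S Y X c) :
    toBase f' (map m t) = toBase (m ≫ f') t := by
  cases t with
  | inj x => rfl
  | fill j v u y hy =>
    rw [map]
    rfl

lemma map_injective (m : X ⟶ X') (hm : ∀ c, Function.Injective (m.app c)) {c : Cᵒᵖ}
    (t t' : PT S Y X c) (h : map m t = map m t') : t = t' := by
  induction t with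
  | inj x =>
    cases t' with
    | inj x' =>
      simp only [map, inj.injEq] at h
      rw [hm _ h]
    | fill j v u y hy => simp [map] at h
  | fill j v u y hy ih =>
    cases t' with
    | inj x' => simp [map] at h
    | fill j' v' u' y' hy' =>
      simp only [map, fill.injEq] at h
      obtain ⟨rfl, h1, h2, h3⟩ := h
      have h1 := eq_of_heq h1
      have h2 := eq_of_heq h2
      have h3 := eq_of_heq h3
      subst h1 h3
      congr 1
      funext d a
      exact ih d a _ (congr_fun (congr_fun h2 d) a)

lemma good_map (m : X ⟶ X') (f' : X' ⟶ Y) {c : Cᵒᵖ} (t : PT S Y X c)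
    (h : Good (m ≫ f') t) : Good f' (map m t) := by
  induction t with
  | inj x => simp [map, Good]
  | fill j v u y hy ih =>
    rw [good_fill_iff] at h
    rw [map, good_fill_iff]
    refine ⟨fun d a => ih d a (h.1 d a), fun d e g a => ?_, fun d a => ?_⟩
    · exact (congr_arg (map m) (h.2.1 d e g a)).trans (map_res m g _)
    · exact (map_toBase m f' _).trans (h.2.2 d a)

lemma good_of_map (m : X ⟶ X') (hm : ∀ c, Function.Injective (m.app c)) (f' : X' ⟶ Y)
    {c : Cᵒᵖ} (t : PT S Y X c) (h : Good f' (map m t)) : Good (m ≫ f') t := by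
  induction t with
  | inj x => simp [Good]
  | fill j v u y hy ih =>
    rw [map, good_fill_iff] at h
    rw [good_fill_iff]
    refine ⟨fun d a => ih d a (h.1 d a), fun d e g a => ?_, fun d a => ?_⟩
    · apply map_injective m hm
      rw [map_res]
      exact h.2.1 d e g a
    · rw [← map_toBase]
      exact h.2.2 d a

lemma map_comp (m : X ⟶ X') (m' : X' ⟶ X'') {c : Cᵒᵖ} (t : PT S Y X c) :
    map (m ≫ m') t = map m' (map m t) := by
  induction t with
  | inj x => rfl
  | fill j v u y hy ih =>
    simp only [map, fill.injEq, heq_eq_eq, true_and, and_true]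
    funext d a
    exact ih d a

/-- Support of a pre-term. -/
def supp : ∀ {c : Cᵒᵖ}, PT S Y X c → Set (Σ c, X.obj c)
  | c, inj x => {⟨c, x⟩}
  | _, fill j _ u _ _ => ⋃ p : (Σ d, (S.A j).obj d), supp (u p.1 p.2)

lemma exists_map_of_supp (N : Subfunctor X) {c : Cᵒᵖ} (t : PT S Y X c)
    (h : ∀ p ∈ supp t, p.2 ∈ N.obj p.1) : ∃ t' : PT S Y N.toFunctor c, map N.ι t' = t := by
  induction t with
  | @inj c x =>
    exact ⟨inj ⟨x, h ⟨c, x⟩ (by simp [supp])⟩, rfl⟩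
  | fill j v u y hy ih =>
    have : ∀ d a, ∃ t' : PT S Y N.toFunctor d, map N.ι t' = u d a := fun d a => ih d a (by
      intro p hp
      apply h
      rw [supp]
      exact Set.mem_iUnion.2 ⟨⟨d, a⟩, hp⟩)
    choose u' hu' using this
    refine ⟨fill j v u' y hy, ?_⟩
    rw [map]
    simp only [hu']

lemma card_supp (κ : Cardinal.{u}) (hκ : Cardinal.aleph0 ≤ κ)
    (hS : ∀ j, Cardinal.mk (Σ d, (S.A j).obj d) ≤ κ) {c : Cᵒᵖ} (t : PT S Y X c) :
    Cardinal.mk (supp t) ≤ κ := by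
  induction t with
  | inj x =>
    rw [supp]
    simpa using Cardinal.one_le_aleph0.trans hκ
  | fill j v u y hy ih =>
    rw [supp]
    refine (Cardinal.mk_iUnion_le _).trans ?_
    have h1 : (⨆ p : (Σ d, (S.A j).obj d), Cardinal.mk (supp (u p.1 p.2))) ≤ κ :=
      ciSup_le' fun p => ih p.1 p.2
    calc _ ≤ κ * κ := mul_le_mul' (hS j) h1
      _ = κ := Cardinal.mul_eq_self hκ

end PT

/-- The middle object of the factorization. -/
noncomputable def Fac (S : Cells C) {X Y : Psh C} (f : X ⟶ Y) : Psh C where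
  obj c := { t : PT S Y X c // PT.Good f t }
  map g := ↾fun t => ⟨PT.res g t.1, PT.good_res g t.1 t.2⟩
  map_id c := by
    ext t
    first
    | exact PT.res_id t.1
    | (apply Subtype.ext; exact PT.res_id t.1)
  map_comp g k := by
    ext t
    first
    | exact PT.res_comp g k t.1 t.2
    | (apply Subtype.ext; exact PT.res_comp g k t.1 t.2)

namespace Fac

variable (S : Cells C) {X Y : Psh C} (f : X ⟶ Y)

/-- First factor. -/
noncomputable def incl : X ⟶ Fac S f :=
  pshHom (fun _ x => ⟨PT.inj x, by simp [PT.Good]⟩) (fun _ _ _ _ => rfl)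

/-- Second factor. -/
noncomputable def proj : Fac S f ⟶ Y :=
  pshHom (fun _ t => PT.toBase f t.1) (fun _ _ g t => PT.toBase_res g t.1 t.2)

lemma incl_proj : incl S f ≫ proj S f = f := rfl

instance mono_incl : Mono (incl S f) := by
  rw [psh_mono_iff]
  intro c x y h
  have := congr_arg Subtype.val h
  exact PT.inj.inj this

variable {S f}

/-- The cell map. -/
noncomputable def cellMap {j : S.J} {v : S.B j ⟶ Y} {u : ∀ d, (S.A j).obj d → PT S Y X d}
    (h : PT.Bd f j v u) : S.B j ⟶ Fac S f :=
  pshHom (fun c y => ⟨PT.cell j v u c y, PT.good_cell h c y⟩)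
    (fun _ _ g y => Subtype.ext (PT.res_cell h g y).symm)

lemma cellMap_proj {j : S.J} {v : S.B j ⟶ Y} {u : ∀ d, (S.A j).obj d → PT S Y X d}
    (h : PT.Bd f j v u) : cellMap h ≫ proj S f = v :=
  psh_hom_ext fun c y => PT.toBase_cell h c y

lemma bd_of_map {j : S.J} (a : (S.A j).toFunctor ⟶ Fac S f) (v : S.B j ⟶ Y)
    (h : a ≫ proj S f = (S.A j).ι ≫ v) : PT.Bd f j v (fun d x => (a.app d x).1) := by
  refine ⟨fun d x => (a.app d x).2, fun d e g x => ?_, fun d x => ?_⟩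
  · exact congr_arg Subtype.val (psh_nat a g x)
  · exact congr_arg (fun t => t.app d x) h

variable (S f)

lemma proj_rlp (j : S.J) : HasLiftingProperty (S.A j).ι (proj S f) := by
  apply hlp_of_forall
  intro a v h
  refine ⟨cellMap (bd_of_map a v h), ?_, cellMap_proj _⟩
  apply psh_hom_ext
  intro c x
  exact Subtype.ext (PT.cell_mem _ _ _ _ _ x.2)

lemma incl_llp {E Z : Psh C} (p : E ⟶ Z) (hp : ∀ j, HasLiftingProperty (S.A j).ι p) :
    HasLiftingProperty (incl S f) p := by
  rw [← hlp_range_ι]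
  let 𝒢 : Set (Subfunctor (Fac S f)) := { M | Subfunctor.range (incl S f) ≤ M ∧
    ∀ (j : S.J) (v : S.B j ⟶ Y) (u : ∀ d, (S.A j).obj d → PT S Y X d) (h : PT.Bd f j v u)
      (c : Cᵒᵖ) (y : (S.B j).obj c), y ∉ (S.A j).obj c → (cellMap h).app c y ∈ M.obj c →
      Subfunctor.range (cellMap h) ≤ M }
  refine zorn_lift p 𝒢 ?_ ?_ _ ⟨le_rfl, ?_⟩
  · intro T ⟨M₁, hM₁⟩ hT
    refine ⟨(hT hM₁).1.trans (le_sSup hM₁), ?_⟩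
    rintro j v u h c y hy ⟨_, ⟨M, hM, rfl⟩, hyM⟩
    exact ((hT hM).2 j v u h c y hy hyM).trans (le_sSup hM)
  · intro M hM hne
    obtain ⟨j, v, u, h, hu, hnle⟩ : ∃ (j : S.J) (v : S.B j ⟶ Y)
        (u : ∀ d, (S.A j).obj d → PT S Y X d) (h : PT.Bd f j v u),
        (∀ d a, (⟨u d a, h.1 d a⟩ : (Fac S f).obj d) ∈ M.obj d) ∧
        ¬ Subfunctor.range (cellMap h) ≤ M := by
      by_contra! hcon
      apply hne
      have key : ∀ (c : Cᵒᵖ) (t : PT S Y X c) (ht : PT.Good f t),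
          (⟨t, ht⟩ : (Fac S f).obj c) ∈ M.obj c := by
        intro c t
        induction t with
        | inj x =>
          intro ht
          exact hM.1 _ ⟨x, rfl⟩
        | @fill c j v u y hy ih =>
          intro ht
          have ht' := ht
          rw [PT.good_fill_iff] at ht'
          have := hcon j v u ht' (fun d a => ih d a _)
          have h2 := this c ⟨y, rfl⟩
          have h3 : (cellMap ht').app c y = ⟨PT.fill j v u y hy, ht⟩ :=
            Subtype.ext (PT.cell_not_mem _ _ _ _ _ hy)
          rw [← h3]
          exact h2
      ext c t
      exact ⟨fun _ => trivial, fun _ => key c t.1 t.2⟩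
    have hmem : ∀ c (b : (S.B j).obj c), b ∈ (S.A j).obj c → (cellMap h).app c b ∈ M.obj c := by
      intro c b hb
      have h3 : (cellMap h).app c b = ⟨u c ⟨b, hb⟩, h.1 _ _⟩ :=
        Subtype.ext (PT.cell_mem _ _ _ _ _ hb)
      rw [h3]
      exact hu _ _
    have hnot : ∀ c (b : (S.B j).obj c), (cellMap h).app c b ∈ M.obj c → b ∈ (S.A j).obj c := by
      intro c b hb
      by_contra hb'
      exact hnle (hM.2 j v u h c b hb' hb)
    refine ⟨S.B j, S.A j, cellMap h, hp j, fun c b => ⟨hmem c b, hnot c b⟩, ?_,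
      ⟨hM.1.trans le_sup_left, ?_⟩, hnle⟩
    · intro c b b' e hb
      have hb1 : b ∉ (S.A j).obj c := fun hh => hb (hmem c b hh)
      have hb2 : b' ∉ (S.A j).obj c := fun hh => hb (by rw [e]; exact hmem c b' hh)
      have e' : PT.cell j v u c b = PT.cell j v u c b' := congr_arg Subtype.val e
      rw [PT.cell_not_mem _ _ _ _ _ hb1, PT.cell_not_mem _ _ _ _ _ hb2] at e'
      simpa using e'
    · intro j' v' u' h' c y hy hyM
      rcases hyM with hyM | ⟨b, hb⟩
      · exact (hM.2 j' v' u' h' c y hy hyM).trans le_sup_left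
      · by_cases hbA : b ∈ (S.A j).obj c
        · refine (hM.2 j' v' u' h' c y hy ?_).trans le_sup_left
          rw [← hb]
          exact hmem c b hbA
        · have e' : PT.cell j v u c b = PT.cell j' v' u' c y := congr_arg Subtype.val hb
          rw [PT.cell_not_mem _ _ _ _ _ hbA, PT.cell_not_mem _ _ _ _ _ hy] at e'
          cases e'
          exact le_sup_right
  · rintro j v u h c y hy ⟨x, hx⟩
    exfalso
    have e' : PT.inj x = PT.cell j v u c y := congr_arg Subtype.val hx
    rw [PT.cell_not_mem _ _ _ _ _ hy] at e'
    cases e'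

end Fac

/-- The fibrant replacement associated to a set of cells. -/
noncomputable def Rep (S : Cells C) (X : Psh C) : Psh C := Fac S (terminal.from X)

namespace Rep

variable (S : Cells C)

/-- The unit. -/
noncomputable def η (X : Psh C) : X ⟶ Rep S X := Fac.incl S _

instance (X : Psh C) : Mono (η S X) := Fac.mono_incl _ _

/-- Functoriality. -/
noncomputable def map {X X' : Psh C} (m : X ⟶ X') : Rep S X ⟶ Rep S X' :=
  pshHom (fun _ t => ⟨PT.map m t.1, PT.good_map m _ t.1 (by
    rw [Subsingleton.elim (m ≫ terminal.from X') (terminal.from X)]; exact t.2)⟩)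
    (fun _ _ g t => Subtype.ext (PT.map_res m g t.1))

lemma η_map {X X' : Psh C} (m : X ⟶ X') : η S X ≫ map S m = m ≫ η S X' := rfl

lemma map_comp {X X' X'' : Psh C} (m : X ⟶ X') (m' : X' ⟶ X'') :
    map S (m ≫ m') = map S m ≫ map S m' :=
  psh_hom_ext fun _ t => Subtype.ext (PT.map_comp m m' t.1)

instance {X X' : Psh C} (m : X ⟶ X') [hm : Mono m] : Mono (map S m) := by
  rw [psh_mono_iff] at hm ⊢
  intro c t t' h
  exact Subtype.ext (PT.map_injective m hm _ _ (congr_arg Subtype.val h))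

lemma exists_supp (κ : Cardinal.{u}) (hκ : Cardinal.aleph0 ≤ κ)
    (hS : ∀ j, Cardinal.mk (Σ d, (S.A j).obj d) ≤ κ) {X : Psh C} {c : Cᵒᵖ}
    (t : (Rep S X).obj c) : ∃ s : Set (Σ c, X.obj c), Cardinal.mk s ≤ κ ∧
      ∀ N : Subfunctor X, (∀ p ∈ s, p.2 ∈ N.obj p.1) →
        t ∈ (Subfunctor.range (map S N.ι)).obj c := by
  refine ⟨PT.supp t.1, PT.card_supp κ hκ hS _, fun N hN => ?_⟩
  obtain ⟨t', ht'⟩ := PT.exists_map_of_supp N t.1 hN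
  refine ⟨⟨t', ?_⟩, Subtype.ext ht'⟩
  rw [← Subsingleton.elim (N.ι ≫ terminal.from X) (terminal.from N.toFunctor)]
  apply PT.good_of_map _ ((psh_mono_iff N.ι).1 inferInstance)
  rw [ht']
  exact t.2

end Rep

end Terms

section PshCats
variable {C : Type u} [SmallCategory C]

lemma sub_eq_top_of_mem {X : Psh C} (M : Subfunctor X) (r : X ⟶ M.toFunctor) (h : r ≫ M.ι = 𝟙 X)
    (c : Cᵒᵖ) (x : X.obj c) : x ∈ M.obj c := by
  have := congr_arg (fun t => t.app c x) h
  have h2 : (r.app c x).1 = x := this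
  rw [← h2]
  exact (r.app c x).2

lemma coprod_cases (X Y : Psh C) (c : Cᵒᵖ) (z : (X ⨿ Y).obj c) :
    (∃ x, (coprod.inl : X ⟶ X ⨿ Y).app c x = z) ∨
    (∃ y, (coprod.inr : Y ⟶ X ⨿ Y).app c y = z) := by
  let M := Subfunctor.range (coprod.inl : X ⟶ X ⨿ Y) ⊔ Subfunctor.range (coprod.inr : Y ⟶ X ⨿ Y)
  exact sub_eq_top_of_mem M
    (coprod.desc (Subfunctor.lift coprod.inl (le_sup_left : _ ≤ M))
      (Subfunctor.lift coprod.inr (le_sup_right : _ ≤ M)))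
    (by apply coprod.hom_ext <;> simp) c z

lemma mono_pushout_desc {K L M N : Psh C} {f : K ⟶ L} {g : K ⟶ M} {a : L ⟶ N} {b : M ⟶ N}
    (h : IsPullback f g a b) [Mono a] [Mono b] : Mono (pushout.desc a b h.w) := by
  rw [NatTrans.mono_iff_mono_app]
  intro c
  have h1 := (IsPushout.of_hasPushout f g).app c
  have h2 := h.app c
  have ha : Mono (a.app c) := inferInstance
  have hb : Function.Injective (b.app c) := (psh_mono_iff b).1 inferInstance c
  exact Types.mono_of_isPushout_of_isPullback h1 h2
    (by rw [← NatTrans.comp_app, pushout.inl_desc])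
    (by rw [← NatTrans.comp_app, pushout.inr_desc]) (fun x y _ _ e => hb e)

namespace ElementaryHomotopyData
variable (E : ElementaryHomotopyData C)

/-- Endpoint inclusions. -/
def ed : Bool → ∀ X : Psh C, X ⟶ E.cyl.obj X
  | false, X => E.d0.app X
  | true, X => E.d1.app X

/-- Projection. -/
def pr (X : Psh C) : E.cyl.obj X ⟶ X := E.σ.app X

lemma ed_nat (e : Bool) {X Y : Psh C} (f : X ⟶ Y) :
    E.ed e X ≫ E.cyl.map f = f ≫ E.ed e Y := by
  cases e
  · exact (E.d0.naturality f).symm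
  · exact (E.d1.naturality f).symm

lemma pr_nat {X Y : Psh C} (f : X ⟶ Y) :
    E.cyl.map f ≫ E.pr Y = E.pr X ≫ f := E.σ.naturality f

lemma ed_pr (e : Bool) (X : Psh C) : E.ed e X ≫ E.pr X = 𝟙 X := by
  cases e
  · exact E.d0_σ X
  · exact E.d1_σ X

lemma ed_nat_assoc (e : Bool) {X Y Z : Psh C} (f : X ⟶ Y) (g : E.cyl.obj Y ⟶ Z) :
    E.ed e X ≫ E.cyl.map f ≫ g = f ≫ E.ed e Y ≫ g := by
  rw [← assoc, ed_nat, assoc]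

lemma ed_pr_assoc (e : Bool) (X : Psh C) {Z : Psh C} (g : X ⟶ Z) :
    E.ed e X ≫ E.pr X ≫ g = g := by
  rw [← assoc, ed_pr, id_comp]

lemma pr_nat_assoc {X Y Z : Psh C} (f : X ⟶ Y) (g : Y ⟶ Z) :
    E.cyl.map f ≫ E.pr Y ≫ g = E.pr X ≫ f ≫ g := by
  rw [← assoc, pr_nat, assoc]

lemma mono_ed (e : Bool) (X : Psh C) : Mono (E.ed e X) :=
  mono_of_mono_fac (E.ed_pr e X)

/-- Open box lifting. -/
def BoxLift {K L X Y : Psh C} (e : Bool) (j : K ⟶ L) (p : X ⟶ Y) : Prop :=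
  ∀ (a : E.cyl.obj K ⟶ X) (b : L ⟶ X) (β : E.cyl.obj L ⟶ Y),
    E.ed e K ≫ a = j ≫ b → a ≫ p = E.cyl.map j ≫ β → E.ed e L ≫ β = b ≫ p →
    ∃ θ : E.cyl.obj L ⟶ X, E.cyl.map j ≫ θ = a ∧ E.ed e L ≫ θ = b ∧ θ ≫ p = β

/-- Boundary lifting. -/
def BdLift {K L X Y : Psh C} (j : K ⟶ L) (p : X ⟶ Y) : Prop :=
  ∀ (a : E.cyl.obj K ⟶ X) (b : Bool → (L ⟶ X)) (β : E.cyl.obj L ⟶ Y),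
    (∀ e, E.ed e K ≫ a = j ≫ b e) → a ≫ p = E.cyl.map j ≫ β → (∀ e, E.ed e L ≫ β = b e ≫ p) →
    ∃ θ : E.cyl.obj L ⟶ X, E.cyl.map j ≫ θ = a ∧ (∀ e, E.ed e L ≫ θ = b e) ∧ θ ≫ p = β

/-- The gluing maps. -/
noncomputable def gl (e : Bool) {K L : Psh C} (j : K ⟶ L) :
    pushout (E.ed e K) j ⟶ E.cyl.obj L :=
  pushout.desc (E.cyl.map j) (E.ed e L) (E.ed_nat e j)

lemma gl_iff (e : Bool) {K L X Y : Psh C} (j : K ⟶ L) (p : X ⟶ Y) :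
    HasLiftingProperty (E.gl e j) p ↔ E.BoxLift e j p := by
  constructor
  · intro h a b β h1 h2 h3
    obtain ⟨θ, ht1, ht2⟩ := hlp_lift h (pushout.desc a b h1) β (by
      apply pushout.hom_ext
      · rw [pushout.inl_desc_assoc, gl, pushout.inl_desc_assoc, h2]
      · rw [pushout.inr_desc_assoc, gl, pushout.inr_desc_assoc, h3])
    refine ⟨θ, ?_, ?_, ht2⟩
    · have := pushout.inl _ _ ≫= ht1
      rw [gl, pushout.inl_desc_assoc, pushout.inl_desc] at this
      exact this
    · have := pushout.inr _ _ ≫= ht1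
      rw [gl, pushout.inr_desc_assoc, pushout.inr_desc] at this
      exact this
  · intro h
    apply hlp_of_forall
    intro u v huv
    obtain ⟨θ, h1, h2, h3⟩ := h (pushout.inl _ _ ≫ u) (pushout.inr _ _ ≫ u) v
      (by rw [← assoc, pushout.condition, assoc])
      (by rw [assoc, huv, gl, pushout.inl_desc_assoc])
      (by rw [assoc, huv, gl, pushout.inr_desc_assoc])
    refine ⟨θ, ?_, h3⟩
    apply pushout.hom_ext
    · rw [gl, pushout.inl_desc_assoc, h1]
    · rw [gl, pushout.inr_desc_assoc, h2]

lemma glBoth_iff {K L X Y : Psh C} (j : K ⟶ L) (p : X ⟶ Y) :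
    HasLiftingProperty (E.gluingBoth j) p ↔ E.BdLift j p := by
  constructor
  · intro h a b β h1 h2 h3
    have h10 : E.d0.app K ≫ a = j ≫ b false := h1 false
    have h11 : E.d1.app K ≫ a = j ≫ b true := h1 true
    have h30 : E.d0.app L ≫ β = b false ≫ p := h3 false
    have h31 : E.d1.app L ≫ β = b true ≫ p := h3 true
    obtain ⟨θ, ht1, ht2⟩ := hlp_lift h (pushout.desc a (coprod.desc (b false) (b true)) (by
        apply coprod.hom_ext
        · rw [coprod.inl_desc_assoc, coprod.inl_map_assoc, coprod.inl_desc, h10]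
        · rw [coprod.inr_desc_assoc, coprod.inr_map_assoc, coprod.inr_desc, h11])) β (by
      apply pushout.hom_ext
      · rw [pushout.inl_desc_assoc, gluingBoth, pushout.inl_desc_assoc, h2]
      · rw [pushout.inr_desc_assoc, gluingBoth, pushout.inr_desc_assoc]
        apply coprod.hom_ext
        · rw [coprod.inl_desc_assoc, coprod.inl_desc_assoc, h30]
        · rw [coprod.inr_desc_assoc, coprod.inr_desc_assoc, h31])
    refine ⟨θ, ?_, ?_, ht2⟩
    · have := pushout.inl _ _ ≫= ht1
      rw [gluingBoth, pushout.inl_desc_assoc, pushout.inl_desc] at this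
      exact this
    · have h0 := coprod.inl ≫= pushout.inr _ _ ≫= ht1
      have h1 := coprod.inr ≫= pushout.inr _ _ ≫= ht1
      rw [gluingBoth, pushout.inr_desc_assoc, pushout.inr_desc, coprod.inl_desc_assoc,
        coprod.inl_desc] at h0
      rw [gluingBoth, pushout.inr_desc_assoc, pushout.inr_desc, coprod.inr_desc_assoc,
        coprod.inr_desc] at h1
      rintro (_ | _)
      · exact h0
      · exact h1
  · intro h
    apply hlp_of_forall
    intro u v huv
    obtain ⟨θ, h1, h2, h3⟩ := h (pushout.inl _ _ ≫ u)
      (fun e => (cond e coprod.inr coprod.inl) ≫ pushout.inr _ _ ≫ u) v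
      (by
        have h := pushout.condition
          (f := coprod.desc (E.d0.app K) (E.d1.app K)) (g := coprod.map j j) =≫ u
        have h0 := coprod.inl ≫= h
        have h1 := coprod.inr ≫= h
        rw [assoc, assoc, coprod.inl_desc_assoc, coprod.inl_map_assoc] at h0
        rw [assoc, assoc, coprod.inr_desc_assoc, coprod.inr_map_assoc] at h1
        rintro (_ | _)
        · exact h0
        · exact h1)
      (by rw [assoc, huv, gluingBoth, pushout.inl_desc_assoc])
      (by
        rintro (_ | _)
        · rw [assoc, assoc, huv, gluingBoth, pushout.inr_desc_assoc]
          exact (coprod.inl_desc_assoc _ _ _).symm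
        · rw [assoc, assoc, huv, gluingBoth, pushout.inr_desc_assoc]
          exact (coprod.inr_desc_assoc _ _ _).symm)
    refine ⟨θ, ?_, h3⟩
    apply pushout.hom_ext
    · rw [gluingBoth, pushout.inl_desc_assoc, h1]
    · rw [gluingBoth, pushout.inr_desc_assoc]
      apply coprod.hom_ext
      · rw [coprod.inl_desc_assoc]
        exact h2 false
      · rw [coprod.inr_desc_assoc]
        exact h2 true

lemma mono_gl (e : Bool) {K L : Psh C} (j : K ⟶ L) [Mono j] : Mono (E.gl e j) := by
  have h : IsPullback (E.ed e K) j (E.cyl.map j) (E.ed e L) := by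
    cases e
    · exact (E.isPullback0 j inferInstance).flip
    · exact (E.isPullback1 j inferInstance).flip
  have := E.preservesMono j inferInstance
  have := E.mono_ed e L
  exact mono_pushout_desc h

lemma mono_glBoth {K L : Psh C} (j : K ⟶ L) [Mono j] : Mono (E.gluingBoth j) := by
  have := E.preservesMono j inferInstance
  have mL := E.mono_pair L
  have mK := E.mono_pair K
  have w : coprod.desc (E.d0.app K) (E.d1.app K) ≫ E.cyl.map j =
      coprod.map j j ≫ coprod.desc (E.d0.app L) (E.d1.app L) := by
    apply coprod.hom_ext
    · rw [coprod.inl_desc_assoc, coprod.inl_map_assoc, coprod.inl_desc]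
      exact (E.d0.naturality j).symm
    · rw [coprod.inr_desc_assoc, coprod.inr_map_assoc, coprod.inr_desc]
      exact (E.d1.naturality j).symm
  have h : IsPullback (coprod.desc (E.d0.app K) (E.d1.app K)) (coprod.map j j) (E.cyl.map j)
      (coprod.desc (E.d0.app L) (E.d1.app L)) := by
    refine IsPullback.of_forall_isPullback_app fun c => ?_
    rw [Types.isPullback_iff]
    refine ⟨by rw [← NatTrans.comp_app, w, NatTrans.comp_app], fun x y hxy =>
      (psh_mono_iff _).1 mK c hxy.1, ?_⟩
    intro x y hxy
    rcases coprod_cases L L c y with ⟨l, rfl⟩ | ⟨l, rfl⟩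
    · have e1 : (E.cyl.map j).app c x = (E.d0.app L).app c l := by
        rw [hxy]
        exact congr_arg (fun t => t.app c l) (coprod.inl_desc (E.d0.app L) (E.d1.app L))
      obtain ⟨k, hk1, hk2⟩ := Types.exists_of_isPullback
        ((E.isPullback0 j inferInstance).app c) l x e1.symm
      refine ⟨(coprod.inl : K ⟶ K ⨿ K).app c k, ?_, ?_⟩
      · rw [← hk2]
        exact congr_arg (fun t => t.app c k) (coprod.inl_desc (E.d0.app K) (E.d1.app K))
      · rw [← hk1]
        exact congr_arg (fun t => t.app c k) (coprod.inl_map j j)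
    · have e1 : (E.cyl.map j).app c x = (E.d1.app L).app c l := by
        rw [hxy]
        exact congr_arg (fun t => t.app c l) (coprod.inr_desc (E.d0.app L) (E.d1.app L))
      obtain ⟨k, hk1, hk2⟩ := Types.exists_of_isPullback
        ((E.isPullback1 j inferInstance).app c) l x e1.symm
      refine ⟨(coprod.inr : K ⟶ K ⨿ K).app c k, ?_, ?_⟩
      · rw [← hk2]
        exact congr_arg (fun t => t.app c k) (coprod.inr_desc (E.d0.app K) (E.d1.app K))
      · rw [← hk1]
        exact congr_arg (fun t => t.app c k) (coprod.inr_map j j)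
  have mL' : Mono (coprod.desc (E.d0.app L) (E.d1.app L) : L ⨿ L ⟶ E.cyl.obj L) := mL
  exact mono_pushout_desc h (b := (coprod.desc (E.d0.app L) (E.d1.app L) : L ⨿ L ⟶ E.cyl.obj L))

lemma isLeftAdjoint_cyl : E.cyl.IsLeftAdjoint := by
  have := E.preservesColimits
  exact Presheaf.isLeftAdjoint_of_preservesColimits.{u, u, u} (C := Cᵒᵖ) E.cyl

/-- The path object functor. -/
noncomputable def P : Psh C ⥤ Psh C :=
  have := E.isLeftAdjoint_cyl
  E.cyl.rightAdjoint

/-- The adjunction. -/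
noncomputable def adj : E.cyl ⊣ E.P :=
  have := E.isLeftAdjoint_cyl
  Adjunction.ofIsLeftAdjoint E.cyl

/-- Transpose. -/
noncomputable def tr {X Y : Psh C} : (E.cyl.obj X ⟶ Y) ≃ (X ⟶ E.P.obj Y) := E.adj.homEquiv X Y

/-- Evaluation of paths. -/
noncomputable def ev (e : Bool) (X : Psh C) : E.P.obj X ⟶ X := E.ed e _ ≫ E.tr.symm (𝟙 _)

lemma tr_ev (e : Bool) {X Y : Psh C} (a : E.cyl.obj X ⟶ Y) : E.tr a ≫ E.ev e Y = E.ed e X ≫ a := by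
  have : E.cyl.map (E.tr a) ≫ E.tr.symm (𝟙 _) = a := by
    refine (E.adj.homEquiv_naturality_left_symm (E.tr a) (𝟙 _)).symm.trans ?_
    rw [comp_id]
    exact E.tr.symm_apply_apply a
  rw [ev, ← assoc, ← ed_nat, assoc, this]

lemma tr_left {X X' Y : Psh C} (f : X ⟶ X') (a : E.cyl.obj X' ⟶ Y) :
    E.tr (E.cyl.map f ≫ a) = f ≫ E.tr a := Adjunction.homEquiv_naturality_left _ _ _

lemma tr_right {X Y Y' : Psh C} (a : E.cyl.obj X ⟶ Y) (g : Y ⟶ Y') :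
    E.tr (a ≫ g) = E.tr a ≫ E.P.map g := Adjunction.homEquiv_naturality_right _ _ _

lemma ev_nat (e : Bool) {X Y : Psh C} (f : X ⟶ Y) : E.P.map f ≫ E.ev e Y = E.ev e X ≫ f := by
  have := E.tr_ev e (E.tr.symm (𝟙 _) ≫ f)
  rw [tr_right, Equiv.apply_symm_apply, id_comp] at this
  rw [this, ev, assoc]

/-- Leibniz path map at one end. -/
noncomputable def pe (e : Bool) {X Y : Psh C} (p : X ⟶ Y) :
    E.P.obj X ⟶ pullback (E.ev e Y) p :=
  pullback.lift (E.P.map p) (E.ev e X) (E.ev_nat e p)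

/-- Leibniz path map at both ends. -/
noncomputable def pb {X Y : Psh C} (p : X ⟶ Y) :
    E.P.obj X ⟶ pullback (prod.lift (E.ev false Y) (E.ev true Y)) (prod.map p p) :=
  pullback.lift (E.P.map p) (prod.lift (E.ev false X) (E.ev true X)) (by
    apply Limits.prod.hom_ext <;> simp [ev_nat])

lemma boxLift_iff (e : Bool) {K L X Y : Psh C} (j : K ⟶ L) (p : X ⟶ Y) :
    E.BoxLift e j p ↔ HasLiftingProperty j (E.pe e p) := by
  constructor
  · intro h
    apply hlp_of_forall
    intro u v huv
    have hu1 : u ≫ E.P.map p = j ≫ v ≫ pullback.fst _ _ := by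
      have := huv =≫ pullback.fst _ _
      rw [assoc, assoc, pe, pullback.lift_fst] at this
      exact this
    have hu2 : u ≫ E.ev e X = j ≫ v ≫ pullback.snd _ _ := by
      have := huv =≫ pullback.snd _ _
      rw [assoc, assoc, pe, pullback.lift_snd] at this
      exact this
    obtain ⟨θ, h1, h2, h3⟩ := h (E.tr.symm u) (v ≫ pullback.snd _ _)
      (E.tr.symm (v ≫ pullback.fst _ _))
      (by rw [← tr_ev, Equiv.apply_symm_apply, hu2])
      (by
        apply E.tr.injective
        rw [tr_right, tr_left, Equiv.apply_symm_apply, Equiv.apply_symm_apply, hu1])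
      (by rw [← tr_ev, Equiv.apply_symm_apply, assoc, pullback.condition, assoc])
    refine ⟨E.tr θ, ?_, ?_⟩
    · rw [← tr_left, h1, Equiv.apply_symm_apply]
    · apply pullback.hom_ext
      · rw [assoc, pe, pullback.lift_fst, ← tr_right, h3, Equiv.apply_symm_apply]
      · rw [assoc, pe, pullback.lift_snd, tr_ev, h2]
  · intro h a b β h1 h2 h3
    obtain ⟨l, hl1, hl2⟩ := hlp_lift h (E.tr a) (pullback.lift (E.tr β) b (by rw [tr_ev, h3])) (by
      apply pullback.hom_ext
      · rw [assoc, assoc, pe, pullback.lift_fst, pullback.lift_fst, ← tr_right, ← tr_left, h2]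
      · rw [assoc, assoc, pe, pullback.lift_snd, pullback.lift_snd, tr_ev, h1])
    have e1 := congr_arg (fun t => t ≫ pullback.fst _ _) hl2
    have e2 := congr_arg (fun t => t ≫ pullback.snd _ _) hl2
    simp only [assoc, pe, pullback.lift_fst, pullback.lift_snd] at e1 e2
    refine ⟨E.tr.symm l, ?_, ?_, ?_⟩
    · apply E.tr.injective
      rw [tr_left, Equiv.apply_symm_apply, hl1]
    · rw [← tr_ev, Equiv.apply_symm_apply, e2]
    · apply E.tr.injective
      rw [tr_right, Equiv.apply_symm_apply, e1]

lemma bdLift_iff {K L X Y : Psh C} (j : K ⟶ L) (p : X ⟶ Y) :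
    E.BdLift j p ↔ HasLiftingProperty j (E.pb p) := by
  constructor
  · intro h
    apply hlp_of_forall
    intro u v huv
    have hu1 : u ≫ E.P.map p = j ≫ v ≫ pullback.fst _ _ := by
      have := huv =≫ pullback.fst _ _
      rw [assoc, assoc, pb, pullback.lift_fst] at this
      exact this
    have hu2 : u ≫ E.ev false X = j ≫ v ≫ pullback.snd _ _ ≫ prod.fst := by
      have := huv =≫ (pullback.snd _ _ ≫ prod.fst)
      rw [assoc, assoc, pb, pullback.lift_snd_assoc, prod.lift_fst] at this
      exact this
    have hu3 : u ≫ E.ev true X = j ≫ v ≫ pullback.snd _ _ ≫ prod.snd := by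
      have := huv =≫ (pullback.snd _ _ ≫ prod.snd)
      rw [assoc, assoc, pb, pullback.lift_snd_assoc, prod.lift_snd] at this
      exact this
    have c0 := congr_arg (fun t => v ≫ t ≫ prod.fst) (pullback.condition
      (f := prod.lift (E.ev false Y) (E.ev true Y)) (g := prod.map p p))
    have c1 := congr_arg (fun t => v ≫ t ≫ prod.snd) (pullback.condition
      (f := prod.lift (E.ev false Y) (E.ev true Y)) (g := prod.map p p))
    simp only [assoc, prod.lift_fst, prod.lift_snd, prod.map_fst, prod.map_snd] at c0 c1
    obtain ⟨θ, h1, h2, h3⟩ := h (E.tr.symm u)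
      (fun e => v ≫ pullback.snd _ _ ≫ (cond e prod.snd prod.fst))
      (E.tr.symm (v ≫ pullback.fst _ _))
      (by
        rintro (_ | _)
        · rw [← tr_ev, Equiv.apply_symm_apply, hu2]
          rfl
        · rw [← tr_ev, Equiv.apply_symm_apply, hu3]
          rfl)
      (by
        apply E.tr.injective
        rw [tr_right, tr_left, Equiv.apply_symm_apply, Equiv.apply_symm_apply, hu1])
      (by
        rintro (_ | _)
        · rw [← tr_ev, Equiv.apply_symm_apply, assoc, c0]
          simp
        · rw [← tr_ev, Equiv.apply_symm_apply, assoc, c1]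
          simp)
    refine ⟨E.tr θ, ?_, ?_⟩
    · rw [← tr_left, h1, Equiv.apply_symm_apply]
    · apply pullback.hom_ext
      · rw [assoc, pb, pullback.lift_fst, ← tr_right, h3, Equiv.apply_symm_apply]
      · rw [assoc, pb, pullback.lift_snd]
        apply Limits.prod.hom_ext
        · rw [assoc, prod.lift_fst, tr_ev, h2, assoc]
          rfl
        · rw [assoc, prod.lift_snd, tr_ev, h2, assoc]
          rfl
  · intro h a b β h1 h2 h3
    obtain ⟨l, hl1, hl2⟩ := hlp_lift h (E.tr a)
      (pullback.lift (E.tr β) (prod.lift (b false) (b true)) (by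
        apply Limits.prod.hom_ext <;> simp [tr_ev, h3])) (by
      apply pullback.hom_ext
      · rw [assoc, assoc, pb, pullback.lift_fst, pullback.lift_fst, ← tr_right, ← tr_left, h2]
      · rw [assoc, assoc, pb, pullback.lift_snd, pullback.lift_snd]
        apply Limits.prod.hom_ext <;> simp [tr_ev, h1])
    have e1 := congr_arg (fun t => t ≫ pullback.fst _ _) hl2
    have e2 := congr_arg (fun t => t ≫ pullback.snd _ _ ≫ prod.fst) hl2
    have e3 := congr_arg (fun t => t ≫ pullback.snd _ _ ≫ prod.snd) hl2
    simp only [assoc, pb, pullback.lift_fst, pullback.lift_snd_assoc, prod.lift_fst,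
      prod.lift_snd] at e1 e2 e3
    refine ⟨E.tr.symm l, ?_, ?_, ?_⟩
    · apply E.tr.injective
      rw [tr_left, Equiv.apply_symm_apply, hl1]
    · rintro (_ | _)
      · rw [← tr_ev, Equiv.apply_symm_apply, e2]
      · rw [← tr_ev, Equiv.apply_symm_apply, e3]
    · apply E.tr.injective
      rw [tr_right, Equiv.apply_symm_apply, e1]

end ElementaryHomotopyData
end PshCats

section Gens
variable {C : Type u} [SmallCategory C]

/-- Presheaves with values in subsets of a fixed type. -/
structure SmallPsh (C : Type u) [SmallCategory C] (Z : Type u) where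
  obj : Cᵒᵖ → Set Z
  map : ∀ {c d : Cᵒᵖ}, (c ⟶ d) → obj c → obj d
  map_id : ∀ (c : Cᵒᵖ) (x : obj c), map (𝟙 c) x = x
  map_comp : ∀ {c d e : Cᵒᵖ} (g : c ⟶ d) (h : d ⟶ e) (x : obj c), map (g ≫ h) x = map h (map g x)

/-- The associated presheaf. -/
def SmallPsh.toPsh {Z : Type u} (F : SmallPsh C Z) : Psh C where
  obj c := F.obj c
  map g := ↾(F.map g)
  map_id c := by
    ext x
    exact congr_arg Subtype.val (F.map_id c x)
  map_comp g h := by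
    ext x
    exact congr_arg Subtype.val (F.map_comp g h x)

lemma SmallPsh.exists_iso {Z : Type u} (N : Psh C)
    (h : ∀ c, Cardinal.mk (N.obj c) ≤ Cardinal.mk Z) :
    ∃ F : SmallPsh C Z, Nonempty (F.toPsh ≅ N) := by
  have : ∀ c, Nonempty (N.obj c ↪ Z) := fun c => h c
  let φ : ∀ c, N.obj c ↪ Z := fun c => (this c).some
  let ψ : ∀ c, N.obj c ≃ Set.range (φ c) := fun c => Equiv.ofInjective _ (φ c).injective
  let F : SmallPsh C Z :=
    { obj := fun c => Set.range (φ c)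
      map := fun {c d} g x => ψ d (N.map g ((ψ c).symm x))
      map_id := fun c x => by simp
      map_comp := fun g h x => by simp }
  refine ⟨F, ⟨NatIso.ofComponents (fun c => (ψ c).symm.toIso) ?_⟩⟩
  intro c d g
  ext x
  exact (ψ d).symm_apply_apply _

/-- The cells whose inclusion satisfies a given property. -/
def smallCells (C : Type u) [SmallCategory C] (Z : Type u) (Φ : MorphismProperty (Psh C)) : Cells C where
  J := { x : (Σ F : SmallPsh C Z, Subfunctor F.toPsh) // Φ x.2.ι }
  B x := x.1.1.toPsh
  A x := x.1.2

lemma smallCells_hlp {Z : Type u} (Φ : MorphismProperty (Psh C))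
    (hΦ : ∀ ⦃A B A' B' : Psh C⦄ (f : A ⟶ B) (f' : A' ⟶ B'), Nonempty (Arrow.mk f ≅ Arrow.mk f') →
      Φ f → Φ f')
    {X Y : Psh C} (p : X ⟶ Y)
    (hp : ∀ j, HasLiftingProperty ((smallCells C Z Φ).A j).ι p)
    (N : Psh C) (A : Subfunctor N) (hA : Φ A.ι)
    (hN : ∀ c, Cardinal.mk (N.obj c) ≤ Cardinal.mk Z) : HasLiftingProperty A.ι p := by
  obtain ⟨F, ⟨e⟩⟩ := SmallPsh.exists_iso N hN
  let i := A.ι ≫ e.inv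
  have e1 : Arrow.mk A.ι ≅ Arrow.mk i := Arrow.isoMk (Iso.refl _) e.symm (by simp [i])
  have e2 : Arrow.mk i ≅ Arrow.mk (Subfunctor.range i).ι :=
    Arrow.isoMk (asIso (Subfunctor.toRange i)) (Iso.refl _) (by simp)
  have h1 : Φ (Subfunctor.range i).ι := hΦ _ _ ⟨e1 ≪≫ e2⟩ hA
  have h2 := hp ⟨⟨F, Subfunctor.range i⟩, h1⟩
  have h3 : HasLiftingProperty (Subfunctor.range i).ι p := h2
  exact HasLiftingProperty.of_arrow_iso_left (e1 ≪≫ e2).symm p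

/-- A type bounding the size of representables. -/
def Z0 (C : Type u) [SmallCategory C] : Type u := Σ c : C, Σ d : C, (c ⟶ d)

/-- Generating monomorphisms. -/
def genC (C : Type u) [SmallCategory C] : Cells C := smallCells C (Z0 C) ⊤

lemma rlp_genC {X Y : Psh C} (p : X ⟶ Y)
    (hp : ∀ j, HasLiftingProperty ((genC C).A j).ι p) {K L : Psh C} (j : K ⟶ L) [Mono j] :
    HasLiftingProperty j p := by
  rw [← hlp_range_ι]
  refine zorn_lift p Set.univ (fun _ _ _ => trivial) ?_ _ trivial
  intro M _ hM
  obtain ⟨c, x, hx⟩ : ∃ c, ∃ x : L.obj c, x ∉ M.obj c := by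
    by_contra! hcon
    apply hM
    ext c x
    exact ⟨fun _ => trivial, fun _ => hcon c x⟩
  let y : yoneda.obj c.unop ⟶ L := yonedaEquiv.symm x
  let N := Subfunctor.range y
  have hxN : x ∈ N.obj c := ⟨𝟙 _, by simp [y, yonedaEquiv]⟩
  refine ⟨N.toFunctor, M.preimage N.ι, N.ι, ?_, fun _ _ => Iff.rfl, ?_, trivial, ?_⟩
  · refine smallCells_hlp (Z := Z0 C) ⊤ (fun _ _ _ _ _ _ _ _ => trivial) p hp N.toFunctor _ trivial ?_
    intro d
    refine (Cardinal.mk_range_le (f := y.app d)).trans ?_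
    exact Cardinal.mk_le_of_injective (f := fun g : d.unop ⟶ c.unop => (⟨_, _, g⟩ : Z0 C)) (by
      intro g g' h
      have h1 := eq_of_heq (Sigma.mk.inj h).2
      exact eq_of_heq (Sigma.mk.inj h1).2)
  · intro d b b' e _
    exact Subtype.ext e
  · intro h
    exact hx (h c ⟨⟨x, hxN⟩, rfl⟩)

/-- A monomorphism, bundled. -/
structure MonoArr (C : Type u) [SmallCategory C] where
  K : Psh C
  L : Psh C
  j : K ⟶ L
  m : Mono j

namespace ElementaryHomotopyData
variable (E : ElementaryHomotopyData C)

/-- Boundary step. -/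
noncomputable def stepM (x : MonoArr C) : MonoArr C :=
  ⟨_, _, E.gluingBoth x.j, have := x.m; E.mono_glBoth x.j⟩

variable (T : Monad (Psh C)) (h1b : ∀ X : Psh C, Mono (T.η.app X)) {ι : Type u} (G : ι → Psh C)

/-- Base cells. -/
noncomputable def baseM : (ι ⊕ ((genC C).J × Bool)) → MonoArr C
  | Sum.inl i => ⟨_, _, T.η.app (G i), h1b _⟩
  | Sum.inr x => ⟨_, _, E.gl x.2 ((genC C).A x.1).ι, E.mono_gl _ _⟩

/-- All cells. -/
noncomputable def lamM (b : (ι ⊕ ((genC C).J × Bool))) : ℕ → MonoArr C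
  | 0 => baseM E T h1b G b
  | n + 1 => E.stepM (lamM b n)

/-- The set of cells generating anodyne extensions. -/
noncomputable def lamC : Cells C where
  J := ULift.{u} ℕ × (ι ⊕ ((genC C).J × Bool))
  B x := (lamM E T h1b G x.2 x.1.down).L
  A x := Subfunctor.range (lamM E T h1b G x.2 x.1.down).j

lemma lamC_hlp_iff {X Y : Psh C} (p : X ⟶ Y) (n : ℕ) (b) :
    HasLiftingProperty ((lamC E T h1b G).A (⟨n⟩, b)).ι p ↔
      HasLiftingProperty (lamM E T h1b G b n).j p := by
  have := (lamM E T h1b G b n).m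
  exact hlp_range_ι (lamM E T h1b G b n).j p

lemma lamM_mem (b) (n : ℕ) : E.LambdaN (unitsOf T G) n (lamM E T h1b G b n).j := by
  induction n with
  | zero =>
    rcases b with i | ⟨x, e⟩
    · exact Lambda0.ofS _ (unitsOf.mk i)
    · cases e
      · exact Lambda0.glue0 _ inferInstance
      · exact Lambda0.glue1 _ inferInstance
  | succ n ih => exact LambdaStep.glue _ ih

lemma lamC_rlp_aux (n : ℕ) : ∀ {X Y : Psh C} (p : X ⟶ Y)
    (_ : ∀ j, HasLiftingProperty ((lamC E T h1b G).A j).ι p) {A B : Psh C} (f : A ⟶ B),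
    E.LambdaN (unitsOf T G) n f → HasLiftingProperty f p := by
  induction n with
  | zero =>
    intro X Y p hp A B f hf
    have hgl : ∀ (e : Bool) {K L : Psh C} (j : K ⟶ L) (_ : Mono j),
        HasLiftingProperty (E.gl e j) p := by
      intro e K L j hj
      rw [gl_iff, boxLift_iff]
      refine rlp_genC _ (fun x => ?_) j
      rw [← boxLift_iff, ← gl_iff]
      exact (lamC_hlp_iff E T h1b G p 0 (Sum.inr (x, e))).1 (hp _)
    cases hf with
    | ofS f h =>
      obtain ⟨i⟩ := h
      exact (lamC_hlp_iff E T h1b G p 0 (Sum.inl i)).1 (hp _)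
    | glue0 j hj => exact hgl false j hj
    | glue1 j hj => exact hgl true j hj
  | succ n ih =>
    intro X Y p hp A B f hf
    obtain ⟨j, hj⟩ := hf
    rw [glBoth_iff, bdLift_iff]
    refine ih _ ?_ j hj
    rintro ⟨⟨m⟩, b⟩
    rw [lamC_hlp_iff, ← bdLift_iff, ← glBoth_iff]
    exact (lamC_hlp_iff E T h1b G p (m + 1) b).1 (hp _)

lemma lamC_rlp_iff {X Y : Psh C} (p : X ⟶ Y) :
    (∀ j, HasLiftingProperty ((lamC E T h1b G).A j).ι p) ↔ RLP (E.Lambda (unitsOf T G)) p := by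
  constructor
  · rintro hp A B f ⟨n, hf⟩
    exact lamC_rlp_aux E T h1b G n p hp f hf
  · rintro hp ⟨⟨n⟩, b⟩
    rw [lamC_hlp_iff]
    exact hp _ ⟨n, lamM_mem E T h1b G b n⟩

end ElementaryHomotopyData
end Gens

section Htp
variable {C : Type u} [SmallCategory C]

lemma mono_initial_to (L : Psh C) : Mono (initial.to L) := by
  rw [psh_mono_iff]
  intro c x
  exact (sub_eq_top_of_mem (⊥ : Subfunctor (⊥_ (Psh C))) (initial.to _)
    (initial.hom_ext _ _) c x).elim

namespace ElementaryHomotopyData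
variable (E : ElementaryHomotopyData C) (U : MorphismProperty (Psh C))

/-- Naive fibrations. -/
def NF : MorphismProperty (Psh C) := RLP (E.Lambda U)

/-- Fibrant objects. -/
def Fibr (A : Psh C) : Prop := E.NF U (terminal.from A)

lemma fibr_of_ext (A : Psh C) (h : ∀ ⦃K L : Psh C⦄ (f : K ⟶ L), E.Lambda U f → ∀ u : K ⟶ A,
    ∃ l : L ⟶ A, f ≫ l = u) : E.Fibr U A := by
  intro K L f hf
  apply hlp_of_forall
  intro u v _
  obtain ⟨l, hl⟩ := h f hf u
  exact ⟨l, hl, Subsingleton.elim _ _⟩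

lemma hlp_terminal {K L A : Psh C} {f : K ⟶ L} (h : HasLiftingProperty f (terminal.from A))
    (u : K ⟶ A) : ∃ l : L ⟶ A, f ≫ l = u := by
  obtain ⟨l, hl, _⟩ := hlp_lift h u (terminal.from L) (Subsingleton.elim _ _)
  exact ⟨l, hl⟩

variable {U E}

lemma NF.comp {X Y Z : Psh C} {p : X ⟶ Y} {q : Y ⟶ Z} (hp : E.NF U p) (hq : E.NF U q) :
    E.NF U (p ≫ q) := by
  intro K L f hf
  have := hp f hf
  have := hq f hf
  infer_instance

lemma NF.fibr {X Y : Psh C} {p : X ⟶ Y} (hp : E.NF U p) (hY : E.Fibr U Y) : E.Fibr U X := by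
  have := hp.comp hY
  rwa [Subsingleton.elim (p ≫ terminal.from Y) (terminal.from X)] at this

lemma NF.box {X Y : Psh C} {p : X ⟶ Y} (hp : E.NF U p) (e : Bool) {K L : Psh C} (j : K ⟶ L)
    [hj : Mono j] : E.BoxLift e j p := by
  rw [← gl_iff]
  cases e
  · exact hp _ ⟨0, Lambda0.glue0 j hj⟩
  · exact hp _ ⟨0, Lambda0.glue1 j hj⟩

lemma NF.pb {X Y : Psh C} {p : X ⟶ Y} (hp : E.NF U p) : E.NF U (E.pb p) := by
  rintro K L f ⟨n, hf⟩
  rw [← bdLift_iff, ← glBoth_iff]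
  exact hp _ ⟨n + 1, LambdaStep.glue f hf⟩

lemma NF.htpy_lift {X Y : Psh C} {p : X ⟶ Y} (hp : E.NF U p) (e : Bool) {L : Psh C} (b : L ⟶ X)
    (β : E.cyl.obj L ⟶ Y) (h : E.ed e L ≫ β = b ≫ p) :
    ∃ θ : E.cyl.obj L ⟶ X, E.ed e L ≫ θ = b ∧ θ ≫ p = β := by
  have := mono_initial_to L
  obtain ⟨θ, _, h2, h3⟩ := hp.box e (initial.to L) (E.tr.symm (initial.to _)) b β
    (initial.hom_ext _ _) (E.tr.injective (initial.hom_ext _ _)) h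
  exact ⟨θ, h2, h3⟩

lemma NF.square {X A Y : Psh C} {p : A ⟶ Y} (hp : E.NF U p) (e : Bool)
    (b : Bool → (E.cyl.obj X ⟶ A)) (c : E.cyl.obj X ⟶ A) (β : E.cyl.obj (E.cyl.obj X) ⟶ Y)
    (h1 : ∀ s, E.ed e X ≫ b s = E.ed s X ≫ c)
    (h2 : ∀ s, b s ≫ p = E.cyl.map (E.ed s X) ≫ β)
    (h3 : E.ed e _ ≫ β = c ≫ p) :
    ∃ d : E.cyl.obj X ⟶ A, (∀ s, E.ed s X ≫ d = E.ed (!e) X ≫ b s) ∧ d ≫ p = E.ed (!e) _ ≫ β := by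
  let j : X ⨿ X ⟶ E.cyl.obj X := coprod.desc (E.ed false X) (E.ed true X)
  have hj : Mono j := E.mono_pair X
  let a : E.cyl.obj (X ⨿ X) ⟶ A := E.tr.symm (coprod.desc (E.tr (b false)) (E.tr (b true)))
  have ha0 : E.cyl.map coprod.inl ≫ a = b false := by
    apply E.tr.injective
    rw [tr_left, Equiv.apply_symm_apply, coprod.inl_desc]
  have ha1 : E.cyl.map coprod.inr ≫ a = b true := by
    apply E.tr.injective
    rw [tr_left, Equiv.apply_symm_apply, coprod.inr_desc]
  have hj0 : coprod.inl ≫ j = E.ed false X := coprod.inl_desc _ _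
  have hj1 : coprod.inr ≫ j = E.ed true X := coprod.inr_desc _ _
  obtain ⟨θ, ht1, ht2, ht3⟩ := hp.box e j a c β
    (by
      apply coprod.hom_ext
      · rw [← ed_nat_assoc, ha0, h1, ← assoc, hj0]
      · rw [← ed_nat_assoc, ha1, h1, ← assoc, hj1])
    (by
      apply E.tr.injective
      apply coprod.hom_ext
      · rw [← tr_left, ← tr_left, ← assoc, ha0, h2, ← assoc, ← E.cyl.map_comp, hj0]
      · rw [← tr_left, ← tr_left, ← assoc, ha1, h2, ← assoc, ← E.cyl.map_comp, hj1])
    h3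
  refine ⟨E.ed (!e) _ ≫ θ, ?_, by rw [assoc, ht3]⟩
  have k : ∀ s, E.cyl.map (E.ed s X) ≫ θ = b s := by
    rintro (_ | _)
    · rw [← hj0, E.cyl.map_comp, assoc, ht1, ha0]
    · rw [← hj1, E.cyl.map_comp, assoc, ht1, ha1]
  intro s
  rw [← ed_nat_assoc, k]

lemma Fibr.square {X A : Psh C} (hA : E.Fibr U A) (e : Bool)
    (b : Bool → (E.cyl.obj X ⟶ A)) (c : E.cyl.obj X ⟶ A)
    (h1 : ∀ s, E.ed e X ≫ b s = E.ed s X ≫ c) :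
    ∃ d : E.cyl.obj X ⟶ A, (∀ s, E.ed s X ≫ d = E.ed (!e) X ≫ b s) := by
  obtain ⟨d, hd, _⟩ := NF.square hA e b c (terminal.from _) h1
    (fun _ => Subsingleton.elim _ _) (Subsingleton.elim _ _)
  exact ⟨d, hd⟩

lemma htpy_iff {X Y : Psh C} {f g : X ⟶ Y} : E.Htpy f g ↔
    ∃ θ : E.cyl.obj X ⟶ Y, E.ed false X ≫ θ = f ∧ E.ed true X ≫ θ = g := Iff.rfl

lemma Htpy.refl {X Y : Psh C} (f : X ⟶ Y) : E.Htpy f f :=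
  htpy_iff.2 ⟨E.pr X ≫ f, E.ed_pr_assoc _ _ _, E.ed_pr_assoc _ _ _⟩

lemma Htpy.post {X Y Z : Psh C} {f g : X ⟶ Y} (h : E.Htpy f g) (k : Y ⟶ Z) :
    E.Htpy (f ≫ k) (g ≫ k) := by
  obtain ⟨θ, h0, h1⟩ := htpy_iff.1 h
  exact htpy_iff.2 ⟨θ ≫ k, by rw [← assoc, h0], by rw [← assoc, h1]⟩

lemma Htpy.pre {X Y Z : Psh C} {f g : X ⟶ Y} (h : E.Htpy f g) (k : Z ⟶ X) :
    E.Htpy (k ≫ f) (k ≫ g) := by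
  obtain ⟨θ, h0, h1⟩ := htpy_iff.1 h
  exact htpy_iff.2 ⟨E.cyl.map k ≫ θ, by rw [ed_nat_assoc, h0], by rw [ed_nat_assoc, h1]⟩

lemma Fibr.symm {X A : Psh C} (hA : E.Fibr U A) {f g : X ⟶ A} (h : E.Htpy f g) : E.Htpy g f := by
  obtain ⟨θ, h0, h1⟩ := htpy_iff.1 h
  obtain ⟨d, hd⟩ := hA.square false (fun s => cond s (E.pr X ≫ f) θ) (E.pr X ≫ f) (by
    rintro (_ | _)
    · rw [ed_pr_assoc]
      exact h0
    · rw [ed_pr_assoc]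
      exact ed_pr_assoc _ _ _ _)
  refine htpy_iff.2 ⟨d, (hd false).trans h1, (hd true).trans (ed_pr_assoc _ _ _ _)⟩

lemma Fibr.trans {X A : Psh C} (hA : E.Fibr U A) {f g k : X ⟶ A} (h : E.Htpy f g)
    (h' : E.Htpy g k) : E.Htpy f k := by
  obtain ⟨θ, h0, h1⟩ := htpy_iff.1 h
  obtain ⟨θ', h0', h1'⟩ := htpy_iff.1 h'
  obtain ⟨d, hd⟩ := hA.square false (fun s => cond s θ' (E.pr X ≫ f)) θ (by
    rintro (_ | _)
    · rw [h0]
      exact ed_pr_assoc _ _ _ _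
    · rw [h1]
      exact h0')
  refine htpy_iff.2 ⟨d, (hd false).trans (ed_pr_assoc _ _ _ _), (hd true).trans h1'⟩

lemma Fibr.mk_eq {X A : Psh C} (hA : E.Fibr U A) {f g : X ⟶ A} :
    HQ.mk E f = HQ.mk E g ↔ E.Htpy f g := by
  constructor
  · intro h
    have h1 := Quot.eqvGen_exact h
    exact (Equivalence.eqvGen_iff (r := fun a b : X ⟶ A => E.Htpy a b)
      ⟨fun f => Htpy.refl f, fun h => hA.symm h, fun h h' => hA.trans h h'⟩).1 h1
  · intro h
    exact Quot.sound h

variable (E U)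

lemma precomp_comp {X Y Z A : Psh C} (f : X ⟶ Y) (g : Y ⟶ Z) :
    E.precomp (A := A) (f ≫ g) = E.precomp f ∘ E.precomp g := by
  funext x
  obtain ⟨h, rfl⟩ := Quot.exists_rep x
  exact congr_arg (HQ.mk E) (assoc f g h)

/-- Bijectivity of precomposition. -/
def BijOn (A : Psh C) {X Y : Psh C} (f : X ⟶ Y) : Prop :=
  Function.Bijective (E.precomp (A := A) f)

variable {E}

lemma BijOn.comp {X Y Z A : Psh C} {f : X ⟶ Y} {g : Y ⟶ Z} (hf : E.BijOn A f) (hg : E.BijOn A g) :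
    E.BijOn A (f ≫ g) := by
  rw [BijOn, precomp_comp]
  exact Function.Bijective.comp hf hg

lemma BijOn.of_post {X Y Z A : Psh C} {f : X ⟶ Y} {g : Y ⟶ Z} (hg : E.BijOn A g)
    (h : E.BijOn A (f ≫ g)) : E.BijOn A f := by
  rw [BijOn, precomp_comp] at h
  exact (Function.Bijective.of_comp_iff _ hg).1 h

lemma BijOn.of_pre {X Y Z A : Psh C} {f : X ⟶ Y} {g : Y ⟶ Z} (hf : E.BijOn A f)
    (h : E.BijOn A (f ≫ g)) : E.BijOn A g := by
  rw [BijOn, precomp_comp] at h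
  exact (Function.Bijective.of_comp_iff' hf _).1 h

lemma Fibr.bij_iff {A : Psh C} (hA : E.Fibr U A) {X Y : Psh C} (f : X ⟶ Y) :
    E.BijOn A f ↔ (∀ u : X ⟶ A, ∃ v : Y ⟶ A, E.Htpy (f ≫ v) u) ∧
      (∀ v w : Y ⟶ A, E.Htpy (f ≫ v) (f ≫ w) → E.Htpy v w) := by
  constructor
  · rintro ⟨hi, hs⟩
    constructor
    · intro u
      obtain ⟨x, hx⟩ := hs (HQ.mk E u)
      obtain ⟨v, rfl⟩ := Quot.exists_rep x
      exact ⟨v, hA.mk_eq.1 hx⟩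
    · intro v w h
      exact hA.mk_eq.1 (hi (a₁ := HQ.mk E v) (a₂ := HQ.mk E w) (hA.mk_eq.2 h))
  · rintro ⟨hs, hi⟩
    constructor
    · intro x y h
      obtain ⟨v, rfl⟩ := Quot.exists_rep x
      obtain ⟨w, rfl⟩ := Quot.exists_rep y
      exact hA.mk_eq.2 (hi v w (hA.mk_eq.1 h))
    · intro x
      obtain ⟨u, rfl⟩ := Quot.exists_rep x
      obtain ⟨v, hv⟩ := hs u
      exact ⟨HQ.mk E v, hA.mk_eq.2 hv⟩

variable (E)

/-- Weak equivalences: detected by fibrant objects. -/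
def WE : MorphismProperty (Psh C) := fun _ _ f => ∀ A, E.Fibr U A → E.BijOn A f

/-- Naive fibrations with fibrant codomain. -/
def NFF : MorphismProperty (Psh C) := fun _ Y p => E.NF U p ∧ E.Fibr U Y

variable {E U}

lemma WE.comp {X Y Z : Psh C} {f : X ⟶ Y} {g : Y ⟶ Z} (hf : E.WE U f) (hg : E.WE U g) :
    E.WE U (f ≫ g) := fun A hA => (hf A hA).comp (hg A hA)

lemma WE.of_post {X Y Z : Psh C} {f : X ⟶ Y} {g : Y ⟶ Z} (hg : E.WE U g)
    (h : E.WE U (f ≫ g)) : E.WE U f := fun A hA => (hg A hA).of_post (h A hA)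

lemma WE.of_pre {X Y Z : Psh C} {f : X ⟶ Y} {g : Y ⟶ Z} (hf : E.WE U f)
    (h : E.WE U (f ≫ g)) : E.WE U g := fun A hA => (hf A hA).of_pre (h A hA)

lemma fibr_one : E.Fibr U (⊤_ (Psh C)) := by
  apply fibr_of_ext
  intro K L f _ u
  exact ⟨terminal.from _, Subsingleton.elim _ _⟩

lemma Fibr.pb_cod {A : Psh C} (hA : E.Fibr U A) :
    E.Fibr U (pullback (prod.lift (E.ev false (⊤_ (Psh C))) (E.ev true (⊤_ (Psh C))))
      (prod.map (terminal.from A) (terminal.from A))) := by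
  have sub1 : ∀ {Z : Psh C} (x y : Z ⟶ (⊤_ (Psh C)) ⨯ (⊤_ (Psh C))), x = y := fun x y =>
    Limits.prod.hom_ext (Subsingleton.elim _ _) (Subsingleton.elim _ _)
  have sub2 : ∀ {Z : Psh C} (x y : Z ⟶ E.P.obj (⊤_ (Psh C))), x = y := fun x y =>
    E.tr.symm.injective (Subsingleton.elim _ _)
  apply fibr_of_ext
  intro K L f hf u
  obtain ⟨l0, h0⟩ := hlp_terminal (hA f hf) (u ≫ pullback.snd _ _ ≫ prod.fst)
  obtain ⟨l1, h1⟩ := hlp_terminal (hA f hf) (u ≫ pullback.snd _ _ ≫ prod.snd)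
  refine ⟨pullback.lift (E.tr (terminal.from _)) (prod.lift l0 l1) (sub1 _ _), ?_⟩
  apply pullback.hom_ext
  · exact sub2 _ _
  · rw [assoc, pullback.lift_snd]
    apply Limits.prod.hom_ext
    · rw [assoc, prod.lift_fst, h0, assoc]
    · rw [assoc, prod.lift_snd, h1, assoc]

lemma we_of_llp {K L : Psh C} {i : K ⟶ L} (hi : LLP (E.NFF U) i) : E.WE U i := by
  intro A hA
  rw [hA.bij_iff]
  constructor
  · intro u
    obtain ⟨l, hl⟩ := hlp_terminal (hi _ ⟨hA, fibr_one⟩) u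
    exact ⟨l, hl ▸ Htpy.refl _⟩
  · intro v w h
    obtain ⟨θ, h0, h1⟩ := htpy_iff.1 h
    have := hi (E.pb (terminal.from A)) ⟨NF.pb hA, hA.pb_cod⟩
    rw [← bdLift_iff] at this
    obtain ⟨τ, _, h2, _⟩ := this θ (fun e => cond e w v) (terminal.from _)
      (by rintro (_ | _); exacts [h0, h1]) (Subsingleton.elim _ _)
      (fun _ => Subsingleton.elim _ _)
    exact htpy_iff.2 ⟨τ, h2 false, h2 true⟩

lemma llp_of_anodyne {K L : Psh C} {i : K ⟶ L} (hi : E.Anodyne U i) : LLP (E.NFF U) i :=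
  fun _ _ g hg => hi g hg.1

lemma WE.ext {K L A : Psh C} {i : K ⟶ L} [Mono i] (hi : E.WE U i) (hA : E.Fibr U A) (u : K ⟶ A) :
    ∃ l : L ⟶ A, i ≫ l = u := by
  obtain ⟨v, hv⟩ := ((hA.bij_iff U i).1 (hi A hA)).1 u
  obtain ⟨θ, h0, h1⟩ := htpy_iff.1 hv
  obtain ⟨τ, t1, t2, _⟩ := NF.box hA false i θ v (terminal.from _) h0 (Subsingleton.elim _ _)
    (Subsingleton.elim _ _)
  refine ⟨E.ed true L ≫ τ, ?_⟩
  rw [← ed_nat_assoc, t1, h1]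

lemma rlp_mono_of_we {M L : Psh C} {q : M ⟶ L} (hq : E.NF U q) (hL : E.Fibr U L)
    (hw : E.WE U q) {A B : Psh C} (j : A ⟶ B) [Mono j] : HasLiftingProperty j q := by
  have hM := hq.fibr hL
  obtain ⟨s0, hs0⟩ := ((hM.bij_iff U q).1 (hw M hM)).1 (𝟙 M)
  have hs1 : E.Htpy (s0 ≫ q) (𝟙 L) := by
    apply ((hL.bij_iff U q).1 (hw L hL)).2
    have := hs0.post q
    rw [assoc, id_comp] at this
    rw [comp_id]
    exact this
  obtain ⟨θ, t0, t1⟩ := htpy_iff.1 hs1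
  obtain ⟨θ', t0', t1'⟩ := hq.htpy_lift false s0 θ t0
  obtain ⟨s, hsdef⟩ : ∃ s, E.ed true L ≫ θ' = s := ⟨_, rfl⟩
  have hs : s ≫ q = 𝟙 L := by rw [← hsdef, assoc, t1', t1]
  have hss : E.Htpy s0 s := htpy_iff.2 ⟨θ', t0', hsdef⟩
  have hh : E.Htpy (𝟙 M) (q ≫ s) := hM.trans (hM.symm hs0) (hss.pre q)
  obtain ⟨h, h0, h1⟩ := htpy_iff.1 hh
  obtain ⟨d, hd, hdq⟩ := hq.square true (fun x => cond x (h ≫ q ≫ s) h) (E.pr M ≫ q ≫ s)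
    (E.cyl.map (E.pr M) ≫ h ≫ q)
    (by
      rintro (_ | _)
      · rw [ed_pr_assoc]
        exact h1
      · rw [ed_pr_assoc]
        change E.ed true M ≫ h ≫ q ≫ s = _
        rw [← assoc, h1, assoc, ← assoc s, hs, id_comp])
    (by
      intro x
      rw [← assoc (E.cyl.map _), ← E.cyl.map_comp, ed_pr, E.cyl.map_id, id_comp]
      cases x
      · rfl
      · change (h ≫ q ≫ s) ≫ q = _
        rw [assoc, assoc, hs, comp_id])
    (by
      rw [ed_nat_assoc, ← assoc (E.ed true M), h1]
      simp only [assoc])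
  have hd0 : E.ed false M ≫ d = 𝟙 M := (hd false).trans h0
  have hd1 : E.ed true M ≫ d = q ≫ s := (hd true).trans (by
    change E.ed false M ≫ h ≫ q ≫ s = _
    rw [← assoc, h0, id_comp])
  have hd2 : d ≫ q = E.pr M ≫ q := by
    rw [hdq, ed_nat_assoc]
    change E.pr M ≫ E.ed false M ≫ h ≫ q = _
    rw [← assoc (E.ed false M), h0, id_comp]
  apply hlp_of_forall
  intro u v huv
  obtain ⟨τ, k1, k2, k3⟩ := hq.box true j (E.cyl.map u ≫ d) (v ≫ s) (E.pr B ≫ v)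
    (by rw [ed_nat_assoc, hd1, ← assoc, huv, assoc])
    (by rw [assoc, hd2, pr_nat_assoc, huv, pr_nat_assoc])
    (by rw [ed_pr_assoc, assoc, hs, comp_id])
  refine ⟨E.ed false B ≫ τ, ?_, ?_⟩
  · rw [← ed_nat_assoc, k1, ed_nat_assoc, hd0, comp_id]
  · rw [assoc, k3, ed_pr_assoc]

lemma we_of_rlp_mono {M L : Psh C} {q : M ⟶ L}
    (h : ∀ ⦃A B : Psh C⦄ (j : A ⟶ B), Mono j → HasLiftingProperty j q) : E.WE U q := by
  obtain ⟨s, _, hs⟩ := hlp_lift (h _ (mono_initial_to L)) (initial.to M) (𝟙 L)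
    (initial.hom_ext _ _)
  obtain ⟨θ, h1, _⟩ := hlp_lift (h _ (E.mono_pair M)) (coprod.desc (𝟙 M) (q ≫ s)) (E.pr M ≫ q)
    (by
      apply coprod.hom_ext
      · rw [coprod.inl_desc_assoc, coprod.inl_desc_assoc]
        exact (id_comp q).trans (E.ed_pr_assoc false M q).symm
      · rw [coprod.inr_desc_assoc, coprod.inr_desc_assoc, assoc, hs, comp_id]
        exact (E.ed_pr_assoc true M q).symm)
  have hh : E.Htpy (𝟙 M) (q ≫ s) := by
    refine ⟨θ, ?_, ?_⟩
    · have := coprod.inl ≫= h1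
      rwa [coprod.inl_desc_assoc, coprod.inl_desc] at this
    · have := coprod.inr ≫= h1
      rwa [coprod.inr_desc_assoc, coprod.inr_desc] at this
  intro A hA
  rw [hA.bij_iff]
  constructor
  · intro u
    refine ⟨s ≫ u, ?_⟩
    have := hA.symm (hh.post u)
    rwa [id_comp, assoc] at this
  · intro v w hvw
    have := hvw.pre s
    rwa [← assoc, hs, id_comp, ← assoc, hs, id_comp] at this

section cells
variable {S : Cells C}

lemma incl_anodyne (hS : ∀ ⦃X Y : Psh C⦄ (p : X ⟶ Y),
    (∀ j, HasLiftingProperty (S.A j).ι p) ↔ E.NF U p) {X Y : Psh C} (f : X ⟶ Y) :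
    E.Anodyne U (Fac.incl S f) :=
  fun _ _ g hg => Fac.incl_llp S f g ((hS g).2 hg)

lemma proj_nf (hS : ∀ ⦃X Y : Psh C⦄ (p : X ⟶ Y),
    (∀ j, HasLiftingProperty (S.A j).ι p) ↔ E.NF U p) {X Y : Psh C} (f : X ⟶ Y) :
    E.NF U (Fac.proj S f) := (hS _).1 (Fac.proj_rlp S f)

lemma rep_fibr (hS : ∀ ⦃X Y : Psh C⦄ (p : X ⟶ Y),
    (∀ j, HasLiftingProperty (S.A j).ι p) ↔ E.NF U p) (X : Psh C) :
    E.Fibr U (Rep S X) := (proj_nf hS _).fibr fibr_one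

lemma rep_η_anodyne (hS : ∀ ⦃X Y : Psh C⦄ (p : X ⟶ Y),
    (∀ j, HasLiftingProperty (S.A j).ι p) ↔ E.NF U p) (X : Psh C) :
    E.Anodyne U (Rep.η S X) := incl_anodyne hS _

lemma rep_η_we (hS : ∀ ⦃X Y : Psh C⦄ (p : X ⟶ Y),
    (∀ j, HasLiftingProperty (S.A j).ι p) ↔ E.NF U p) (X : Psh C) :
    E.WE U (Rep.η S X) := we_of_llp (llp_of_anodyne (rep_η_anodyne hS X))

lemma llp_of_we (hS : ∀ ⦃X Y : Psh C⦄ (p : X ⟶ Y),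
    (∀ j, HasLiftingProperty (S.A j).ι p) ↔ E.NF U p) {K L : Psh C} (i : K ⟶ L) [Mono i]
    (hi : E.WE U i) : LLP (E.NFF U) i := by
  rintro X Y p ⟨hp, hY⟩
  let f := i ≫ Rep.η S L
  have hf : E.WE U f := hi.comp (rep_η_we hS L)
  have hfac : Fac.incl S f ≫ Fac.proj S f = f := Fac.incl_proj S f
  have hprojw : E.WE U (Fac.proj S f) :=
    WE.of_pre (we_of_llp (llp_of_anodyne (incl_anodyne hS f))) (by rw [hfac]; exact hf)
  have hlift := rlp_mono_of_we (proj_nf hS f) (rep_fibr hS L) hprojw i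
  apply hlp_of_forall
  intro u v huv
  obtain ⟨v', hv'⟩ := hlp_terminal (rep_η_anodyne hS L _ hY) v
  obtain ⟨l, hl1, hl2⟩ := hlp_lift (incl_anodyne hS f p hp) u (Fac.proj S f ≫ v') (by
    rw [← assoc, hfac, huv, ← hv', assoc])
  obtain ⟨m, hm1, hm2⟩ := hlp_lift hlift (Fac.incl S f) (Rep.η S L) hfac
  refine ⟨m ≫ l, by rw [← assoc, hm1, hl1], ?_⟩
  rw [assoc, hl2, ← assoc, hm2, hv']

lemma we_iff_llp (hS : ∀ ⦃X Y : Psh C⦄ (p : X ⟶ Y),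
    (∀ j, HasLiftingProperty (S.A j).ι p) ↔ E.NF U p) {K L : Psh C} (i : K ⟶ L) [Mono i] :
    E.WE U i ↔ LLP (E.NFF U) i := ⟨llp_of_we hS i, we_of_llp⟩

lemma we_criterion (hS : ∀ ⦃X Y : Psh C⦄ (p : X ⟶ Y),
    (∀ j, HasLiftingProperty (S.A j).ι p) ↔ E.NF U p) {K L : Psh C} (i : K ⟶ L) [Mono i] :
    E.WE U i ↔ ∃ (r : L ⟶ Rep S K) (h : E.cyl.obj L ⟶ Rep S L), i ≫ r = Rep.η S K ∧
      E.ed false L ≫ h = Rep.η S L ∧ E.ed true L ≫ h = r ≫ Rep.map S i := by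
  constructor
  · intro hi
    obtain ⟨r, hr⟩ := hi.ext (rep_fibr hS K) (Rep.η S K)
    have hL := rep_fibr hS L
    obtain ⟨h, h0, h1⟩ := htpy_iff.1 (((hL.bij_iff U i).1 (hi _ hL)).2 (Rep.η S L)
      (r ≫ Rep.map S i) (by
        rw [← assoc, hr, Rep.η_map]
        exact Htpy.refl _))
    exact ⟨r, h, hr, h0, h1⟩
  · rintro ⟨r, h, hr, h0, h1⟩ A hA
    have hh : E.Htpy (Rep.η S L) (r ≫ Rep.map S i) := htpy_iff.2 ⟨h, h0, h1⟩
    rw [hA.bij_iff]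
    constructor
    · intro u
      obtain ⟨u', hu'⟩ := hlp_terminal (rep_η_anodyne hS K _ hA) u
      refine ⟨r ≫ u', ?_⟩
      rw [← assoc, hr, hu']
      exact Htpy.refl _
    · intro v w hvw
      obtain ⟨v', hv'⟩ := hlp_terminal (rep_η_anodyne hS L _ hA) v
      obtain ⟨w', hw'⟩ := hlp_terminal (rep_η_anodyne hS L _ hA) w
      have key : E.Htpy (Rep.map S i ≫ v') (Rep.map S i ≫ w') := by
        apply ((hA.bij_iff U _).1 (rep_η_we hS K A hA)).2
        rw [← assoc, Rep.η_map, assoc, hv', ← assoc, Rep.η_map, assoc, hw']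
        exact hvw
      have k1 := hh.post v'
      have k2 := hh.post w'
      rw [hv', assoc] at k1
      rw [hw', assoc] at k2
      exact hA.trans k1 (hA.trans (key.pre r) (hA.symm k2))

end cells

end ElementaryHomotopyData
end Htp

section GoodSubs
variable {C : Type u} [SmallCategory C]

lemma lift_mono {X Y Z : Psh C} (g : X ⟶ Z) [Mono g] (f : Y ⟶ Z)
    (h : ∀ c (y : Y.obj c), f.app c y ∈ (Subfunctor.range g).obj c) : ∃ k : Y ⟶ X, k ≫ g = f := by
  choose φ hφ using h
  have hg := (psh_mono_iff g).1 inferInstance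
  refine ⟨pshHom φ ?_, ?_⟩
  · intro c d a y
    apply hg
    rw [hφ, psh_nat, psh_nat, hφ]
  · apply psh_hom_ext
    intro c y
    exact hφ c y

lemma hlp_sup {L X Y : Psh C} (K M : Subfunctor L) (p : X ⟶ Y)
    (h : HasLiftingProperty (K.preimage M.ι).ι p) :
    HasLiftingProperty (Subfunctor.homOfLe (le_sup_left : K ≤ K ⊔ M)) p := by
  have main : ∀ N : Subfunctor L, (hN : N = K ⊔ Subfunctor.range M.ι) → ∀ hK : K ≤ N,
      HasLiftingProperty (Subfunctor.homOfLe hK) p := by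
    rintro N rfl hK
    apply hlp_of_forall
    intro u v huv
    obtain ⟨w, hw1, hw2⟩ := hlp_lift h (K.fromPreimage M.ι ≫ u)
      (Subfunctor.lift M.ι (by
        rintro c _ ⟨y, rfl⟩
        exact Or.inr ⟨y, rfl⟩) ≫ v) (by
        rw [assoc, huv]
        apply psh_hom_ext
        intro c x
        rfl)
    obtain ⟨l, hl1, hl2⟩ := glue_cell K M.ι (fun c b b' e _ => Subtype.ext e) u w (by
      intro c b hb
      exact congr_arg (fun t => t.app c ⟨b, hb⟩) hw1)
    refine ⟨l, ?_, ?_⟩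
    · apply psh_hom_ext
      rintro c ⟨x, hx⟩
      exact hl1 c x hx
    · apply psh_hom_ext
      rintro c ⟨x, hx | ⟨b, rfl⟩⟩
      · exact (congr_arg (p.app c) (hl1 c x hx)).trans (congr_arg (fun t => t.app c ⟨x, hx⟩) huv)
      · exact (congr_arg (p.app c) (hl2 c b)).trans (congr_arg (fun t => t.app c b) hw2)
  exact main _ (by rw [Subfunctor.range_ι]) _

namespace ElementaryHomotopyData
variable (E : ElementaryHomotopyData C)

lemma cyl_cover {L : Psh C} {I : Type*} (B : I → Psh C) (f : ∀ i, B i ⟶ L)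
    (hf : ∀ c (x : L.obj c), ∃ i, x ∈ (Subfunctor.range (f i)).obj c) (c : Cᵒᵖ)
    (w : (E.cyl.obj L).obj c) : ∃ i, w ∈ (Subfunctor.range (E.cyl.map (f i))).obj c := by
  let Q : Subfunctor (E.cyl.obj L) := ⨆ i, Subfunctor.range (E.cyl.map (f i))
  have hQ : ∀ i, Subfunctor.range (E.cyl.map (f i)) ≤ Q := fun i => le_iSup (fun i => Subfunctor.range (E.cyl.map (f i))) i
  have : Epi Q.ι := by
    constructor
    intro Z g g' hg
    apply E.tr.injective
    apply psh_hom_ext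
    intro d x
    obtain ⟨i, y, rfl⟩ := hf d x
    have h1 : E.cyl.map (f i) ≫ g = E.cyl.map (f i) ≫ g' := by
      rw [← Subfunctor.toRange_ι (E.cyl.map (f i)), ← Subfunctor.homOfLe_ι (hQ i), assoc, assoc, hg]
      simp only [assoc]
    have h2 : f i ≫ E.tr g = f i ≫ E.tr g' := by rw [← tr_left, h1, tr_left]
    exact congr_arg (fun t => t.app d y) h2
  have hiso : IsIso Q.ι := isIso_of_mono_of_epi _
  have htop : Q = ⊤ := Q.eq_top_iff_isIso.2 hiso
  have hw : w ∈ Q.obj c := by rw [htop]; trivial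
  simpa [Q, Subfunctor.iSup_obj] using hw

variable {E} {U : MorphismProperty (Psh C)} (S : Cells C)

/-- The image of `Rep` of a subfunctor. -/
noncomputable def RN {L : Psh C} (N : Subfunctor L) : Subfunctor (Rep S L) :=
  Subfunctor.range (Rep.map S N.ι)

lemma RN_of_fac {L B : Psh C} (N : Subfunctor L) (f : B ⟶ L) (m : B ⟶ N.toFunctor)
    (hm : m ≫ N.ι = f) {c} (t : (Rep S B).obj c) : (Rep.map S f).app c t ∈ (RN S N).obj c := by
  refine ⟨(Rep.map S m).app c t, ?_⟩
  have := Rep.map_comp S m N.ι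
  rw [hm] at this
  exact (congr_arg (fun z => z.app c t) this).symm

lemma RN_mono {L : Psh C} {N N' : Subfunctor L} (h : N ≤ N') : RN S N ≤ RN S N' := by
  rintro c _ ⟨t, rfl⟩
  exact RN_of_fac S N' N.ι (Subfunctor.homOfLe h) (Subfunctor.homOfLe_ι h) t

variable (E)

/-- The data witnessing that a subfunctor inclusion is a weak equivalence. -/
structure Crit {L : Psh C} (K : Subfunctor L) (h : E.cyl.obj L ⟶ Rep S L) : Prop where
  h0 : E.ed false L ≫ h = Rep.η S L
  h1 : ∀ c (x : L.obj c), (E.ed true L ≫ h).app c x ∈ (RN S K).obj c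
  h2 : ∀ c (x : L.obj c), x ∈ K.obj c → (E.ed true L ≫ h).app c x = (Rep.η S L).app c x

variable {E}

lemma crit_iff (hS : ∀ ⦃X Y : Psh C⦄ (p : X ⟶ Y),
    (∀ j, HasLiftingProperty (S.A j).ι p) ↔ E.NF U p) {L : Psh C} (K : Subfunctor L) :
    E.WE U K.ι ↔ ∃ h, E.Crit S K h := by
  rw [we_criterion hS]
  constructor
  · rintro ⟨r, h, hr, h0, h1⟩
    refine ⟨h, h0, ?_, ?_⟩
    · intro c x
      rw [h1]
      exact ⟨r.app c x, rfl⟩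
    · intro c x hx
      rw [h1]
      have e : K.ι ≫ r ≫ Rep.map S K.ι = K.ι ≫ Rep.η S L := by
        rw [← assoc, hr, Rep.η_map]
      exact congr_arg (fun t => t.app c ⟨x, hx⟩) e
  · rintro ⟨h, h0, h1, h2⟩
    let g := Rep.map S K.ι
    obtain ⟨r, hr⟩ := lift_mono g (E.ed true L ≫ h) h1
    refine ⟨r, h, ?_, h0, hr.symm⟩
    rw [← cancel_mono g, assoc, hr, Rep.η_map]
    apply psh_hom_ext
    rintro c ⟨x, hx⟩
    exact h2 c x hx

variable (E)

/-- One closure step. -/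
structure St {L : Psh C} (K : Subfunctor L) (h : E.cyl.obj L ⟶ Rep S L) (N N' : Subfunctor L) :
    Prop where
  le : N ≤ N'
  r : ∀ c (x : L.obj c), x ∈ N.obj c → (E.ed true L ≫ h).app c x ∈ (RN S (K ⊓ N')).obj c
  h : ∀ c (w : (E.cyl.obj N.toFunctor).obj c), h.app c ((E.cyl.map N.ι).app c w) ∈ (RN S N').obj c

variable {E S}

lemma St.mono {L : Psh C} {K : Subfunctor L} {h : E.cyl.obj L ⟶ Rep S L} {N N₁ N₂ : Subfunctor L}
    (hs : E.St S K h N N₁) (hle : N₁ ≤ N₂) : E.St S K h N N₂ :=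
  ⟨hs.le.trans hle, fun c x hx => RN_mono S (inf_le_inf le_rfl hle) c (hs.r c x hx),
    fun c w => RN_mono S hle c (hs.h c w)⟩

lemma St.mono_left {L : Psh C} {K : Subfunctor L} {h : E.cyl.obj L ⟶ Rep S L}
    {N N₁ N₂ : Subfunctor L}
    (hs : E.St S K h N₁ N₂) (hle : N ≤ N₁) : E.St S K h N N₂ := by
  refine ⟨hle.trans hs.le, fun c x hx => hs.r c x (hle c hx), fun c w => ?_⟩
  have e : E.cyl.map N.ι = E.cyl.map (Subfunctor.homOfLe hle) ≫ E.cyl.map N₁.ι := by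
    rw [← E.cyl.map_comp, Subfunctor.homOfLe_ι]
  rw [e]
  exact hs.h c ((E.cyl.map (Subfunctor.homOfLe hle)).app c w)

variable (E S)

/-- Good subfunctors. -/
def GoodSub {L : Psh C} (K : Subfunctor L) (h : E.cyl.obj L ⟶ Rep S L) (N : Subfunctor L) : Prop :=
  E.St S K h N N

variable {E S}

/-- Good from a cover. -/
lemma good_of_cover {L : Psh C} {K : Subfunctor L} {h : E.cyl.obj L ⟶ Rep S L} {I : Type*}
    (M : I → Subfunctor L) (N : Subfunctor L) (hN : ∀ c (x : L.obj c), x ∈ N.obj c →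
      ∃ i, x ∈ (M i).obj c) (hs : ∀ i, E.St S K h (M i) N) : E.GoodSub S K h N := by
  refine ⟨le_rfl, ?_, ?_⟩
  · intro c x hx
    obtain ⟨i, hi⟩ := hN c x hx
    exact (hs i).r c x hi
  · intro c w
    obtain ⟨i, w', rfl⟩ := E.cyl_cover (fun i => (M i).toFunctor)
      (fun i => Subfunctor.homOfLe (hs i).le) (by
        rintro c ⟨x, hx⟩
        obtain ⟨i, hi⟩ := hN c x hx
        exact ⟨i, ⟨x, hi⟩, rfl⟩) c w
    have e : E.cyl.map (M i).ι = E.cyl.map (Subfunctor.homOfLe (hs i).le) ≫ E.cyl.map N.ι := by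
      rw [← E.cyl.map_comp, Subfunctor.homOfLe_ι]
    have := (hs i).h c w'
    rw [e] at this
    exact this

lemma good_sSup {L : Psh C} {K : Subfunctor L} {h : E.cyl.obj L ⟶ Rep S L}
    (𝒮 : Set (Subfunctor L)) (h𝒮 : ∀ M ∈ 𝒮, E.GoodSub S K h M) : E.GoodSub S K h (sSup 𝒮) := by
  refine good_of_cover (fun M : 𝒮 => M.1) _ ?_ (fun M => St.mono (h𝒮 M.1 M.2) (le_sSup M.2))
  intro c x hx
  simpa [Subfunctor.sSup_obj] using hx

lemma good_we (hS : ∀ ⦃X Y : Psh C⦄ (p : X ⟶ Y),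
    (∀ j, HasLiftingProperty (S.A j).ι p) ↔ E.NF U p) {L : Psh C} {K : Subfunctor L}
    {h : E.cyl.obj L ⟶ Rep S L} (hK : E.Crit S K h) {N : Subfunctor L} (hN : E.GoodSub S K h N) :
    E.WE U (K.preimage N.ι).ι := by
  rw [crit_iff S hS]
  let g := Rep.map S N.ι
  obtain ⟨k, hk⟩ := lift_mono g (E.cyl.map N.ι ≫ h) hN.h
  have ginj : ∀ {c} {a b : (Rep S N.toFunctor).obj c}, g.app c a = g.app c b → a = b := by
    intro c a b hab
    exact (psh_mono_iff g).1 inferInstance c hab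
  have e1 : (E.ed true _ ≫ k) ≫ g = N.ι ≫ E.ed true _ ≫ h := by
    rw [assoc, hk, ed_nat_assoc]
  refine ⟨k, ?_, ?_, ?_⟩
  · rw [← cancel_mono g, assoc, hk, ed_nat_assoc, hK.h0, Rep.η_map]
  · intro c x
    obtain ⟨t, ht⟩ := hN.r c x.1 x.2
    let m : (K ⊓ N).toFunctor ⟶ (K.preimage N.ι).toFunctor :=
      pshHom (fun c y => ⟨⟨y.1, y.2.2⟩, y.2.1⟩) (fun _ _ _ _ => rfl)
    have hm : m ≫ (K.preimage N.ι).ι = Subfunctor.homOfLe inf_le_right := by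
      apply psh_hom_ext
      intro c y
      rfl
    have e2 := RN_of_fac S _ _ m hm t
    have e3 : (E.ed true _ ≫ k).app c x = (Rep.map S (Subfunctor.homOfLe
        (inf_le_right : K ⊓ N ≤ N))).app c t := by
      apply ginj
      have e4 := Rep.map_comp S (Subfunctor.homOfLe (inf_le_right : K ⊓ N ≤ N)) N.ι
      rw [Subfunctor.homOfLe_ι] at e4
      exact (congr_arg (fun z => z.app c x) e1).trans
        (ht.symm.trans (congr_arg (fun z => z.app c t) e4))
    rw [e3]
    exact e2
  · intro c x hx
    apply ginj
    exact (congr_arg (fun z => z.app c x) e1).trans (hK.h2 c x.1 hx)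

end ElementaryHomotopyData
end GoodSubs

section Sizes
variable {C : Type u} [SmallCategory C]

/-- The set of all elements of a subfunctor. -/
def elts {L : Psh C} (N : Subfunctor L) : Set (Σ c, L.obj c) := { p | p.2 ∈ N.obj p.1 }

/-- The subfunctor generated by a set of elements. -/
def genSub {L : Psh C} (s : Set (Σ c, L.obj c)) : Subfunctor L where
  obj c := { x | ∃ p ∈ s, ∃ g : p.1 ⟶ c, L.map g p.2 = x }
  map := by
    rintro c d g _ ⟨p, hp, k, rfl⟩
    exact ⟨p, hp, k ≫ g, by simp⟩

lemma mem_genSub {L : Psh C} {s : Set (Σ c, L.obj c)} {p : Σ c, L.obj c} (hp : p ∈ s) :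
    p.2 ∈ (genSub s).obj p.1 := ⟨p, hp, 𝟙 _, by simp⟩

open Cardinal in
lemma sigma_le {κ : Cardinal.{u}} (hκ : ℵ₀ ≤ κ) {I : Type u} (F : I → Type u) (hI : #I ≤ κ)
    (hF : ∀ i, #(F i) ≤ κ) : #(Σ i, F i) ≤ κ := by
  rw [Cardinal.mk_sigma]
  refine (Cardinal.sum_le_sum _ (fun _ => κ) hF).trans ?_
  rw [Cardinal.sum_const']
  exact (mul_le_mul' hI le_rfl).trans (Cardinal.mul_eq_self hκ).le

open Cardinal in
lemma card_genSub {κ : Cardinal.{u}} (hκ : ℵ₀ ≤ κ) (hZ : #(Z0 C) ≤ κ) {L : Psh C}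
    (s : Set (Σ c, L.obj c)) (hs : #s ≤ κ) : #(elts (genSub s)) ≤ κ := by
  let F : s → Type u := fun p => Σ c : Cᵒᵖ, (p.1.1 ⟶ c)
  have h1 : #(Σ p, F p) ≤ κ := by
    refine sigma_le hκ F hs (fun p => le_trans ?_ hZ)
    refine Cardinal.mk_le_of_injective (f := fun x : F p => (⟨x.1.unop, p.1.1.unop, x.2.unop⟩ : Z0 C)) ?_
    rintro ⟨c, g⟩ ⟨c', g'⟩ h
    have h1 : c.unop = c'.unop := congr_arg Sigma.fst h
    have h2 : c = c' := Opposite.unop_injective h1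
    subst h2
    have h3 := eq_of_heq (Sigma.mk.inj h).2
    have h4 := eq_of_heq (Sigma.mk.inj h3).2
    have h5 : g = g' := Quiver.Hom.unop_inj h4
    rw [h5]
  refine le_trans ?_ h1
  refine Cardinal.mk_le_of_surjective (f := fun x : (Σ p, F p) =>
    (⟨⟨x.2.1, L.map x.2.2 x.1.1.2⟩, ⟨x.1.1, x.1.2, x.2.2, rfl⟩⟩ : elts (genSub s))) ?_
  rintro ⟨⟨c, z⟩, hz⟩
  obtain ⟨p, hp, g, e⟩ := id hz
  exact ⟨⟨⟨p, hp⟩, ⟨c, g⟩⟩, Subtype.ext (congr_arg (Sigma.mk c) e)⟩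

open Cardinal in
lemma card_iUnion_le {κ : Cardinal.{u}} (hκ : ℵ₀ ≤ κ) {α I : Type u} (F : I → Set α) (hI : #I ≤ κ)
    (hF : ∀ i, #(F i) ≤ κ) : #(⋃ i, F i : Set α) ≤ κ := by
  refine le_trans ?_ (sigma_le hκ (fun i => F i) hI hF)
  refine Cardinal.mk_le_of_surjective (f := fun x : (Σ i, F i) =>
    (⟨x.2.1, Set.mem_iUnion.2 ⟨x.1, x.2.2⟩⟩ : (⋃ i, F i : Set α))) ?_
  rintro ⟨a, ha⟩
  obtain ⟨i, hi⟩ := Set.mem_iUnion.1 ha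
  exact ⟨⟨i, ⟨a, hi⟩⟩, rfl⟩

open Cardinal in
lemma card_union_le {κ : Cardinal.{u}} (hκ : ℵ₀ ≤ κ) {α : Type u} (s t : Set α) (hs : #s ≤ κ)
    (ht : #t ≤ κ) : #(s ∪ t : Set α) ≤ κ :=
  (Cardinal.mk_union_le s t).trans ((add_le_add hs ht).trans (Cardinal.add_eq_self hκ).le)

namespace ElementaryHomotopyData
variable (E : ElementaryHomotopyData C) (S : Cells C)

open Cardinal in
/-- The requirements on the bounding cardinal. -/
structure Bound (κ : Cardinal.{u}) : Prop where
  inf : ℵ₀ ≤ κ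
  arr : #(Z0 C) ≤ κ
  cells : ∀ j, #(Σ d, (S.A j).obj d) ≤ κ
  cyl : ∀ c : C, #(Σ d, (E.cyl.obj (yoneda.obj c)).obj d) ≤ κ

open Cardinal in
lemma exists_bound : ∃ Z : Type u, E.Bound S #Z := by
  let Z : Type u := ULift.{u} ℕ ⊕ Z0 C ⊕ (Σ j, Σ d, (S.A j).obj d) ⊕
    (Σ c : C, Σ d, (E.cyl.obj (yoneda.obj c)).obj d)
  refine ⟨Z, ?_, ?_, ?_, ?_⟩
  · exact Cardinal.aleph0_le_mk_iff.2 inferInstance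
  · exact Cardinal.mk_le_of_injective (f := fun z => (Sum.inr (Sum.inl z) : Z))
      (Sum.inr_injective.comp Sum.inl_injective)
  · intro j
    exact Cardinal.mk_le_of_injective (f := fun z => (Sum.inr (Sum.inr (Sum.inl ⟨j, z⟩)) : Z))
      (Sum.inr_injective.comp (Sum.inr_injective.comp (Sum.inl_injective.comp sigma_mk_injective)))
  · intro j
    exact Cardinal.mk_le_of_injective (f := fun z => (Sum.inr (Sum.inr (Sum.inr ⟨j, z⟩)) : Z))
      (Sum.inr_injective.comp (Sum.inr_injective.comp (Sum.inr_injective.comp sigma_mk_injective)))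

variable {E S} {κ : Cardinal.{u}}

open Cardinal in
lemma Bound.card_cyl (hb : E.Bound S κ) {L : Psh C} (N : Subfunctor L) (hN : #(elts N) ≤ κ) :
    #(Σ d, (E.cyl.obj N.toFunctor).obj d) ≤ κ := by
  let B : elts N → Psh C := fun p => yoneda.obj p.1.1.unop
  let f : ∀ p, B p ⟶ N.toFunctor := fun p => yonedaEquiv.symm ⟨p.1.2, p.2⟩
  refine le_trans ?_ (sigma_le hb.inf (fun p => Σ d, (E.cyl.obj (B p)).obj d) hN
    (fun p => hb.cyl _))
  refine Cardinal.mk_le_of_surjective (f := fun x : (Σ p, Σ d, (E.cyl.obj (B p)).obj d) =>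
    (⟨x.2.1, (E.cyl.map (f x.1)).app _ x.2.2⟩ : (Σ d, (E.cyl.obj N.toFunctor).obj d))) ?_
  rintro ⟨d, w⟩
  obtain ⟨p, w', hw'⟩ := E.cyl_cover B f (by
    rintro c ⟨x, hx⟩
    refine ⟨⟨⟨c, x⟩, hx⟩, 𝟙 _, ?_⟩
    apply Subtype.ext
    simp [f, yonedaEquiv]
    rfl) d w
  exact ⟨⟨p, ⟨d, w'⟩⟩, by simp only [hw']⟩

open Cardinal in
lemma Bound.step (hb : E.Bound S κ) {L : Psh C} {K : Subfunctor L} {h : E.cyl.obj L ⟶ Rep S L}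
    (hK : E.Crit S K h) (N : Subfunctor L) (hN : #(elts N) ≤ κ) :
    ∃ N', #(elts N') ≤ κ ∧ E.St S K h N N' := by
  have hr : ∀ x : elts N, ∃ t : (Rep S K.toFunctor).obj x.1.1,
      (Rep.map S K.ι).app _ t = (E.ed true L ≫ h).app _ x.1.2 := fun x => hK.h1 _ _
  choose t ht using hr
  have hs := fun x => Rep.exists_supp S κ hb.inf hb.cells (t x)
  choose s hs1 hs2 using hs
  have hs' := fun w : (Σ d, (E.cyl.obj N.toFunctor).obj d) =>
    Rep.exists_supp S κ hb.inf hb.cells (h.app w.1 ((E.cyl.map N.ι).app w.1 w.2))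
  choose s' hs1' hs2' using hs'
  let k : (Σ c, K.toFunctor.obj c) → (Σ c, L.obj c) := fun p => ⟨p.1, p.2.1⟩
  let A : Set (Σ c, L.obj c) := elts N ∪ ((⋃ x, k '' s x) ∪ ⋃ w, s' w)
  have hA : #A ≤ κ := by
    refine card_union_le hb.inf _ _ hN (card_union_le hb.inf _ _ ?_ ?_)
    · exact card_iUnion_le hb.inf _ hN (fun x => Cardinal.mk_image_le.trans (hs1 x))
    · exact card_iUnion_le hb.inf _ (hb.card_cyl N hN) hs1'
  refine ⟨genSub A, card_genSub hb.inf hb.arr A hA, ?_, ?_, ?_⟩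
  · intro c x hx
    exact mem_genSub (p := ⟨c, x⟩) (Or.inl hx)
  · intro c x hx
    have hsp := hs2 ⟨⟨c, x⟩, hx⟩ ((genSub A).preimage K.ι) (by
      intro p hp
      exact mem_genSub (p := k p) (Or.inr (Or.inl (Set.mem_iUnion.2 ⟨⟨⟨c, x⟩, hx⟩, p, hp, rfl⟩))))
    obtain ⟨a, ha⟩ := hsp
    rw [← ht ⟨⟨c, x⟩, hx⟩, ← ha]
    let m : ((genSub A).preimage K.ι).toFunctor ⟶ (K ⊓ genSub A).toFunctor :=
      pshHom (fun c y => ⟨y.1.1, y.1.2, y.2⟩) (fun _ _ _ _ => rfl)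
    have hm : m ≫ (K ⊓ genSub A).ι = ((genSub A).preimage K.ι).ι ≫ K.ι := by
      apply psh_hom_ext
      intro c y
      rfl
    have e1 := RN_of_fac S _ _ m hm a
    rw [Rep.map_comp] at e1
    exact e1
  · intro c w
    exact hs2' ⟨c, w⟩ (genSub A) (fun p hp => mem_genSub (Or.inr (Or.inr (Set.mem_iUnion.2 ⟨_, hp⟩))))

open Cardinal in
lemma Bound.exists_good (hb : E.Bound S κ) {L : Psh C} {K K' : Subfunctor L}
    {h h' : E.cyl.obj L ⟶ Rep S L}
    (hK : E.Crit S K h) (hK' : E.Crit S K' h') (N : Subfunctor L) (hN : #(elts N) ≤ κ) :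
    ∃ N', N ≤ N' ∧ #(elts N') ≤ κ ∧ E.GoodSub S K h N' ∧ E.GoodSub S K' h' N' := by
  have step : ∀ M : { M : Subfunctor L // #(elts M) ≤ κ }, ∃ M' : { M : Subfunctor L // #(elts M) ≤ κ },
      E.St S K h M.1 M'.1 ∧ E.St S K' h' M.1 M'.1 := by
    rintro ⟨M, hM⟩
    obtain ⟨M₁, hM₁, a1⟩ := hb.step hK M hM
    obtain ⟨M₂, hM₂, a2⟩ := hb.step hK' M₁ hM₁
    exact ⟨⟨M₂, hM₂⟩, a1.mono a2.le, a2.mono_left a1.le⟩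
  choose φ hφ using step
  let M : ℕ → { M : Subfunctor L // #(elts M) ≤ κ } := fun n => φ^[n] ⟨N, hN⟩
  have hM : ∀ n, E.St S K h (M n).1 (M (n + 1)).1 ∧ E.St S K' h' (M n).1 (M (n + 1)).1 := by
    intro n
    have : M (n + 1) = φ (M n) := Function.iterate_succ_apply' φ n _
    rw [this]
    exact hφ _
  let N' : Subfunctor L := ⨆ n, (M n).1
  have hle : ∀ n, (M n).1 ≤ N' := fun n => le_iSup (fun n => (M n).1) n
  have hcov : ∀ c (x : L.obj c), x ∈ N'.obj c → ∃ n, x ∈ (M n).1.obj c := by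
    intro c x hx
    simpa [N', Subfunctor.iSup_obj] using hx
  refine ⟨N', hle 0, ?_, ?_, ?_⟩
  · refine le_trans (Cardinal.mk_le_mk_of_subset ?_) (card_iUnion_le hb.inf
      (fun n : ULift.{u} ℕ => elts (M n.down).1) ?_ (fun n => (M n.down).2))
    · rintro ⟨c, x⟩ hx
      obtain ⟨n, hn⟩ := hcov c x hx
      exact Set.mem_iUnion.2 ⟨⟨n⟩, hn⟩
    · simpa using hb.inf
  · exact good_of_cover (fun n => (M n).1) _ hcov (fun n => (hM n).1.mono (hle _))
  · exact good_of_cover (fun n => (M n).1) _ hcov (fun n => (hM n).2.mono (hle _))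

end ElementaryHomotopyData
end Sizes

section Final
variable {C : Type u} [SmallCategory C]

namespace ElementaryHomotopyData
variable {E : ElementaryHomotopyData C} {U : MorphismProperty (Psh C)} {S : Cells C}

lemma we_of_iso {X Y : Psh C} (f : X ⟶ Y) [IsIso f] : E.WE U f :=
  we_of_llp (fun _ _ _ _ => inferInstance)

lemma we_iso_inv ⦃A B A' B' : Psh C⦄ (f : A ⟶ B) (f' : A' ⟶ B')
    (h : Nonempty (Arrow.mk f ≅ Arrow.mk f')) (hf : E.WE U f) : E.WE U f' := by
  obtain ⟨e⟩ := h
  have hw : e.hom.left ≫ f' = f ≫ e.hom.right := Arrow.w e.hom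
  have h1 : E.WE U (f ≫ e.hom.right) := hf.comp (we_of_iso e.hom.right)
  rw [← hw] at h1
  exact WE.of_pre (we_of_iso e.hom.left) h1

lemma rlp_acyclic (hS : ∀ ⦃X Y : Psh C⦄ (p : X ⟶ Y),
    (∀ j, HasLiftingProperty (S.A j).ι p) ↔ E.NF U p) {Z : Type u}
    (hb : E.Bound S (Cardinal.mk Z)) {X Y : Psh C} (p : X ⟶ Y)
    (hp : ∀ j, HasLiftingProperty ((smallCells C Z (E.WE U)).A j).ι p)
    {L : Psh C} (K : Subfunctor L) (hK : E.WE U K.ι) : HasLiftingProperty K.ι p := by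
  obtain ⟨h, hc⟩ := (crit_iff S hS K).1 hK
  refine zorn_lift p { M' | ∃ M, E.GoodSub S K h M ∧ K ⊔ M = M' } ?_ ?_ K ?_
  · intro 𝒮 hne h𝒮
    refine ⟨sSup { M | E.GoodSub S K h M ∧ K ⊔ M ∈ 𝒮 }, good_sSup _ (fun M hM => hM.1), ?_⟩
    apply le_antisymm
    · apply sup_le
      · obtain ⟨M', hM'⟩ := hne
        obtain ⟨M, _, rfl⟩ := h𝒮 hM'
        exact le_sup_left.trans (le_sSup hM')
      · apply sSup_le
        rintro M ⟨_, hM⟩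
        exact le_sup_right.trans (le_sSup hM)
    · apply sSup_le
      intro M' hM'
      obtain ⟨M, hM, rfl⟩ := h𝒮 hM'
      exact sup_le_sup le_rfl (le_sSup ⟨hM, hM'⟩)
  · rintro _ ⟨M, hM, rfl⟩ hne
    obtain ⟨c, x, hx⟩ : ∃ c, ∃ x : L.obj c, x ∉ (K ⊔ M).obj c := by
      by_contra! hcon
      apply hne
      ext c x
      exact ⟨fun _ => trivial, fun _ => hcon c x⟩
    have w1 : E.WE U (K.preimage M.ι).ι := good_we hS hc hM
    have w2 : E.WE U (Subfunctor.homOfLe (le_sup_left : K ≤ K ⊔ M)) :=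
      we_of_llp (fun _ _ q hq => hlp_sup K M q (llp_of_we hS _ w1 q hq))
    have w3 : E.WE U (K ⊔ M).ι := WE.of_pre w2 (by rw [Subfunctor.homOfLe_ι]; exact hK)
    obtain ⟨h', hc'⟩ := (crit_iff S hS _).1 w3
    obtain ⟨N, hN, hcard, g1, g2⟩ := hb.exists_good hc hc' (genSub {⟨c, x⟩})
      (card_genSub hb.inf hb.arr _ (by
        rw [Cardinal.mk_singleton]
        exact Cardinal.one_le_aleph0.trans hb.inf))
    refine ⟨N.toFunctor, (K ⊔ M).preimage N.ι, N.ι, ?_, fun _ _ => Iff.rfl, ?_, ?_, ?_⟩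
    · refine smallCells_hlp (E.WE U) we_iso_inv p hp _ _ (good_we hS hc' g2) ?_
      intro d
      refine le_trans ?_ hcard
      exact Cardinal.mk_le_of_injective (f := fun y : N.toFunctor.obj d =>
        (⟨⟨d, y.1⟩, y.2⟩ : elts N)) (by
          intro y y' e
          exact Subtype.ext (eq_of_heq (Sigma.mk.inj (congr_arg Subtype.val e)).2))
    · intro d b b' e _
      exact Subtype.ext e
    · refine ⟨sSup {M, N}, good_sSup _ ?_, ?_⟩
      · rintro _ (rfl | rfl)
        · exact hM
        · exact g1
      · rw [sSup_pair, Subfunctor.range_ι, sup_assoc]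
    · rw [Subfunctor.range_ι]
      intro hle
      exact hx (hle c (hN c (mem_genSub (p := ⟨c, x⟩) rfl)))
  · refine ⟨sSup ∅, good_sSup _ (by simp), by simp⟩

lemma rlp_acyclic_mono (hS : ∀ ⦃X Y : Psh C⦄ (p : X ⟶ Y),
    (∀ j, HasLiftingProperty (S.A j).ι p) ↔ E.NF U p) {Z : Type u}
    (hb : E.Bound S (Cardinal.mk Z)) {X Y : Psh C} (p : X ⟶ Y)
    (hp : ∀ j, HasLiftingProperty ((smallCells C Z (E.WE U)).A j).ι p)
    {K L : Psh C} (i : K ⟶ L) [Mono i] (hi : E.WE U i) : HasLiftingProperty i p := by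
  rw [← hlp_range_ι]
  apply rlp_acyclic hS hb p hp
  refine we_iso_inv i _ ⟨?_⟩ hi
  have : IsIso (Subfunctor.toRange i) := inferInstance
  exact Arrow.isoMk (asIso (Subfunctor.toRange i)) (Iso.refl _) (by simp)

/-- The retract argument. -/
lemma retract_of_fac {X Y Z : Psh C} (i : X ⟶ Z) (p : Z ⟶ Y) [h : HasLiftingProperty (i ≫ p) p] :
    IsRetractOf (i ≫ p) i := by
  obtain ⟨l, h1, h2⟩ := hlp_lift h i (𝟙 Y) (by rw [comp_id])
  exact ⟨𝟙 X, 𝟙 X, l, p, by simp, h2, by rw [id_comp, h1], by rw [id_comp]⟩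

lemma fact_acyclic (hS : ∀ ⦃X Y : Psh C⦄ (p : X ⟶ Y),
    (∀ j, HasLiftingProperty (S.A j).ι p) ↔ E.NF U p) {Z : Type u} {X Y : Psh C} (f : X ⟶ Y) :
    E.WE U (Fac.incl (smallCells C Z (E.WE U)) f) := by
  apply we_of_llp
  intro A B q hq
  apply Fac.incl_llp
  intro j
  exact llp_of_we hS _ j.2 q hq

/-- The model structure for the weak equivalences `WE`. -/
lemma isModelStructure (hS : ∀ ⦃X Y : Psh C⦄ (p : X ⟶ Y),
    (∀ j, HasLiftingProperty (S.A j).ι p) ↔ E.NF U p) :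
    IsModelStructure (E.WE U) (MorphismProperty.monomorphisms (Psh C))
      (RLP (MorphismProperty.monomorphisms (Psh C) ⊓ E.WE U)) := by
  obtain ⟨Z, hb⟩ := exists_bound E S
  have fac1 : ∀ ⦃X Y : Psh C⦄ (f : X ⟶ Y), ∃ (Z : Psh C) (i : X ⟶ Z) (p : Z ⟶ Y),
      (MorphismProperty.monomorphisms (Psh C) ⊓ E.WE U) i ∧
      RLP (MorphismProperty.monomorphisms (Psh C) ⊓ E.WE U) p ∧ i ≫ p = f := by
    intro X Y f
    refine ⟨_, Fac.incl (smallCells C Z (E.WE U)) f, Fac.proj _ f,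
      ⟨Fac.mono_incl _ _, fact_acyclic hS f⟩, ?_, Fac.incl_proj _ f⟩
    rintro A B i ⟨hi, hi'⟩
    have : Mono i := hi
    exact rlp_acyclic_mono hS hb _ (Fac.proj_rlp _ f) i hi'
  have fac2 : ∀ ⦃X Y : Psh C⦄ (f : X ⟶ Y), ∃ (Z : Psh C) (i : X ⟶ Z) (p : Z ⟶ Y),
      Mono i ∧ (∀ ⦃A B : Psh C⦄ (j : A ⟶ B), Mono j → HasLiftingProperty j p) ∧ i ≫ p = f := by
    intro X Y f
    exact ⟨_, Fac.incl (genC C) f, Fac.proj _ f, Fac.mono_incl _ _,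
      fun A B j hj => rlp_genC _ (Fac.proj_rlp _ f) j, Fac.incl_proj _ f⟩
  have tf : ∀ ⦃X Y : Psh C⦄ (p : X ⟶ Y),
      (∀ ⦃A B : Psh C⦄ (j : A ⟶ B), Mono j → HasLiftingProperty j p) ↔
      (RLP (MorphismProperty.monomorphisms (Psh C) ⊓ E.WE U) ⊓ E.WE U) p := by
    intro X Y p
    constructor
    · intro hp
      exact ⟨fun A B j hj => hp j hj.1, we_of_rlp_mono hp⟩
    · rintro ⟨hp, hw⟩ A B j hj
      obtain ⟨W, i, q, hi, hq, rfl⟩ := fac2 p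
      have hiw : E.WE U i := WE.of_post (we_of_rlp_mono hq) hw
      obtain ⟨l, hl1, hl2⟩ := hlp_lift (hp i ⟨hi, hiw⟩) (𝟙 X) q (by rw [id_comp])
      have hjq := hq j hj
      apply hlp_of_forall
      intro u v huv
      obtain ⟨m, hm1, hm2⟩ := hlp_lift hjq (u ≫ i) v (by rw [assoc, huv])
      refine ⟨m ≫ l, by rw [← assoc, hm1, assoc, hl1, comp_id], ?_⟩
      rw [assoc, hl2, hm2]
  refine ⟨fun _ _ _ f g => WE.comp, fun _ _ _ f g => WE.of_post, fun _ _ _ f g => WE.of_pre,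
    ?_, ?_⟩
  · refine ⟨fun A B X Y f g hf hg => hg f hf, ?_, fun X Y g hg => hg, fac1⟩
    intro A B f hf
    obtain ⟨W, i, p, ⟨hi, hiw⟩, hp, rfl⟩ := fac1 f
    have := hf p hp
    have hret := retract_of_fac i p
    have himono : Mono i := hi
    have hm : Mono (i ≫ p) := by
      obtain ⟨a, r, b, r', h1, h2, h3, h4⟩ := hret
      have ha : Mono a := mono_of_mono_fac h1
      have : Mono ((i ≫ p) ≫ b) := by
        rw [← h3]
        exact mono_comp _ _
      exact mono_of_mono _ b
    refine ⟨hm, we_of_llp ?_⟩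
    exact (LLP_isWeaklySaturated.{u} (E.NFF U)).2.2.1 _ _ hret (llp_of_we hS i hiw)
  · refine ⟨fun A B X Y f g hf hg => (tf g).2 hg f hf, ?_, fun X Y g hg => (tf g).1 hg, ?_⟩
    · intro A B f hf
      obtain ⟨W, i, p, hi, hp, rfl⟩ := fac2 f
      have := hf p ((tf p).1 hp)
      obtain ⟨l, h1, h2⟩ := hlp_lift this i (𝟙 B) (by rw [comp_id])
      have : Mono ((i ≫ p) ≫ l) := by rw [h1]; exact hi
      exact mono_of_mono _ l
    · intro X Y f
      obtain ⟨W, i, p, hi, hp, e⟩ := fac2 f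
      exact ⟨W, i, p, hi, (tf p).1 hp, e⟩

lemma lambda_le_anodyne : E.Lambda U ≤ E.Anodyne U := fun _ _ f hf _ _ _ hg => hg f hf

lemma unit_anodyne (T : Monad (Psh C)) {ι : Type u} (G : ι → Psh C)
    (hM2 : ∀ X : Psh C, SaturatedClassGen.{u} (unitsOf T G) (T.η.app X)) (X : Psh C) :
    E.Anodyne (unitsOf T G) (T.η.app X) :=
  hM2 X _ (LLP_isWeaklySaturated _) (fun _ _ f hf => lambda_le_anodyne _ ⟨0, Lambda0.ofS f hf⟩)

lemma algebra_fibr {A : Psh C} (h : E.NaivelyFibrant U A) : E.Fibr U A :=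
  fun _ _ f hf => h f (lambda_le_anodyne f hf)

lemma twe_eq_we (T : Monad (Psh C)) {ι : Type u} (G : ι → Psh C)
    (hM2 : ∀ X : Psh C, SaturatedClassGen.{u} (unitsOf T G) (T.η.app X))
    (hM3 : ∀ A : T.Algebra, E.NaivelyFibrant (unitsOf T G) A.A) :
    E.TWeakEquiv T = E.WE (unitsOf T G) := by
  ext X Y f
  constructor
  · intro hf A hA
    obtain ⟨r, hr⟩ := hlp_terminal (unit_anodyne T G hM2 A _ hA) (𝟙 A)
    have hTA : E.Fibr (unitsOf T G) (T.obj A) := algebra_fibr (hM3 (T.free.obj A))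
    have hb := (hTA.bij_iff _ f).1 (hf (T.free.obj A))
    rw [hA.bij_iff]
    constructor
    · intro u
      obtain ⟨v, hv⟩ := hb.1 (u ≫ T.η.app A)
      refine ⟨v ≫ r, ?_⟩
      have h1 := hv.post r
      have h2 : (u ≫ T.η.app A) ≫ r = u := (assoc _ _ _).trans ((u ≫= hr).trans (comp_id u))
      rw [h2, assoc] at h1
      exact h1
    · intro v w hvw
      have h1 := hvw.post (T.η.app A)
      rw [assoc, assoc] at h1
      have h2 := (hb.2 _ _ h1).post r
      have h3 : ∀ v : Y ⟶ A, (v ≫ T.η.app A) ≫ r = v := fun v =>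
        (assoc _ _ _).trans ((v ≫= hr).trans (comp_id v))
      have h4 := h3 v
      have h5 := h3 w
      rw [h4, h5] at h2
      exact h2
  · intro hf A
    exact hf A.A (algebra_fibr (hM3 A))

end ElementaryHomotopyData
end Final

/-- Theorem (main): given a monad `T` on presheaves satisfying (M1)-(M3) relative to
elementary homotopy data, there is a model structure whose cofibrations are the
monomorphisms, whose weak equivalences are the `T`-weak equivalences and whose fibrations
are the maps with the RLP with respect to maps which are both monomorphisms and `T`-weak
equivalences; in it every `T`-algebra is fibrant and each unit `η_X : X ⟶ TX` is an acyclic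
cofibration into a fibrant object, exhibiting `TX` as a fibrant replacement of `X`. -/
theorem modelStructure_of_monad {C : Type u} [SmallCategory C]
    (E : ElementaryHomotopyData C) (T : Monad (Psh C))
    (hM1a : ∀ ⦃K L : Psh C⦄ (j : K ⟶ L), CategoryTheory.Mono j →
      CategoryTheory.Mono (T.toFunctor.map j))
    (hM1b : ∀ X : Psh C, CategoryTheory.Mono (T.η.app X))
    {ι : Type u} (G : ι → Psh C)
    (hM2 : ∀ X : Psh C, SaturatedClassGen.{u} (unitsOf T G) (T.η.app X))
    (hM3 : ∀ A : T.Algebra, E.NaivelyFibrant (unitsOf T G) A.A)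
    :
    IsModelStructure (E.TWeakEquiv T) (MorphismProperty.monomorphisms (Psh C))
      (RLP (MorphismProperty.monomorphisms (Psh C) ⊓ E.TWeakEquiv T)) ∧
    (∀ A : T.Algebra,
      RLP (MorphismProperty.monomorphisms (Psh C) ⊓ E.TWeakEquiv T)
        (terminal.from A.A)) ∧
    (∀ X : Psh C,
      MorphismProperty.monomorphisms (Psh C) (T.η.app X) ∧
      E.TWeakEquiv T (T.η.app X) ∧
      RLP (MorphismProperty.monomorphisms (Psh C) ⊓ E.TWeakEquiv T)
        (terminal.from (T.toFunctor.obj X))) := by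
  have hS : ∀ ⦃X Y : Psh C⦄ (p : X ⟶ Y),
      (∀ j, HasLiftingProperty ((ElementaryHomotopyData.lamC E T hM1b G).A j).ι p) ↔
        E.NF (unitsOf T G) p := fun X Y p => ElementaryHomotopyData.lamC_rlp_iff E T hM1b G p
  have heq := ElementaryHomotopyData.twe_eq_we T G hM2 hM3
  rw [heq]
  have hfib : ∀ A : T.Algebra,
      RLP (MorphismProperty.monomorphisms (Psh C) ⊓ E.WE (unitsOf T G)) (terminal.from A.A) := by
    rintro A K L i ⟨hi, hiw⟩
    have : Mono i := hi
    apply hlp_of_forall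
    intro u v _
    obtain ⟨l, hl⟩ := hiw.ext (ElementaryHomotopyData.algebra_fibr (hM3 A)) u
    exact ⟨l, hl, Subsingleton.elim _ _⟩
  exact ⟨ElementaryHomotopyData.isModelStructure hS, hfib, fun X => ⟨hM1b X,
    ElementaryHomotopyData.we_of_llp (ElementaryHomotopyData.llp_of_anodyne
      (ElementaryHomotopyData.unit_anodyne T G hM2 X)), hfib (T.free.obj X)⟩⟩

end PaperMSMonad
end

section
/- Let 𝒞 be a small category, (−⊗I) elementary homotopy data on Psh(𝒞), and T a monad on Psh(𝒞) satisfying (M1) and (M2) with generating set of units 𝔊. If f : X → Y is a T-weak equivalence, then f is a weak equivalence in the 𝔊-generated sense: for every naively fibrant presheaf A (with respect to 𝔄_I(𝔊)), the induced map [f,A] : [Y,A] → [X,A] is a bijection. -/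
open CategoryTheory Category Limits

universe w v u

namespace PaperMSMonad

open CategoryTheory Category Limits

lemma isWeaklySaturated_llp {D : Type*} [Category D] {A B : D} (p : A ⟶ B) :
    IsWeaklySaturated.{w} (fun _ _ f => HasLiftingProperty f p : MorphismProperty D) := by
  refine ⟨?_, ?_, ?_, ?_⟩
  · intro X Y f hf
    infer_instance
  · intro Z X Y P t f g b h hf
    have : HasLiftingProperty f p := hf
    exact h.hasLiftingProperty p
  · rintro X Y Z W' f g ⟨i, r, i', r', h1, h2, h3, h4⟩ hg
    have hg' : HasLiftingProperty g p := hg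
    refine ⟨fun {u v} sq => ?_⟩
    have sq' : CommSq (r ≫ u) g p (r' ≫ v) :=
      ⟨by rw [assoc, sq.w, ← assoc, ← h4, assoc]⟩
    refine ⟨⟨⟨i' ≫ sq'.lift, ?_, ?_⟩⟩⟩
    · rw [← assoc, ← h3, assoc, sq'.fac_left, ← assoc, h1, id_comp]
    · rw [assoc, sq'.fac_right, ← assoc, h2, id_comp]
  · intro J _ _ _ _ F hF hlim c ⟨hc⟩
    have : F.IsWellOrderContinuous := ⟨fun m hm => hlim m hm⟩
    exact HasLiftingProperty.transfiniteComposition.hasLiftingProperty_ι_app_bot hc hF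

/-- Postcomposition on homotopy classes. -/
def postcomp {C : Type u} [SmallCategory C] (E : ElementaryHomotopyData C) (X : Psh C)
    {A B : Psh C} (g : A ⟶ B) : E.HQ X A → E.HQ X B :=
  Quot.lift (fun h => ElementaryHomotopyData.HQ.mk E (h ≫ g)) (fun h h' hh => Quot.sound (by
    obtain ⟨θ, h0, h1⟩ := hh
    exact ⟨θ ≫ g, by rw [← Category.assoc, h0], by rw [← Category.assoc, h1]⟩))

lemma precomp_postcomp {C : Type u} [SmallCategory C] (E : ElementaryHomotopyData C)
    {X Y A B : Psh C} (f : X ⟶ Y) (g : A ⟶ B) (a : E.HQ Y A) :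
    E.precomp f (postcomp E Y g a) = postcomp E X g (E.precomp f a) := by
  induction a using Quot.ind with
  | mk a => exact congrArg (Quot.mk _) (Category.assoc f a g).symm

lemma postcomp_retract {C : Type u} [SmallCategory C] (E : ElementaryHomotopyData C)
    {X A B : Psh C} (i : A ⟶ B) (r : B ⟶ A) (h : i ≫ r = 𝟙 A) (a : E.HQ X A) :
    postcomp E X r (postcomp E X i a) = a := by
  induction a using Quot.ind with
  | mk a => exact congrArg (Quot.mk _) (by rw [assoc, h, comp_id])

/-- Lemma: under (M1) and (M2), every `T`-weak equivalence is a weak equivalence in the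
`𝔊`-generated sense: `[f,A] : [Y,A] → [X,A]` is bijective for every naively fibrant `A`. -/
theorem tWeakEquiv_isWeakEquiv {C : Type u} [SmallCategory C]
    (E : ElementaryHomotopyData C) (T : Monad (Psh C))
    (hM1a : ∀ ⦃K L : Psh C⦄ (j : K ⟶ L), CategoryTheory.Mono j →
      CategoryTheory.Mono (T.toFunctor.map j))
    (hM1b : ∀ X : Psh C, CategoryTheory.Mono (T.η.app X))
    {ι : Type u} (G : ι → Psh C)
    (hM2 : ∀ X : Psh C, SaturatedClassGen.{u} (unitsOf T G) (T.η.app X))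
    {X Y : Psh C} (f : X ⟶ Y) (hf : E.TWeakEquiv T f)
    (A : Psh C) (hA : E.NaivelyFibrant (unitsOf T G) A) :
    Function.Bijective (E.precomp (A := A) f) := by
  have hlift : HasLiftingProperty (T.η.app A) (terminal.from A) := by
    refine hM2 A _ (isWeaklySaturated_llp (terminal.from A)) ?_
    intro K L g hg
    refine hA g ?_
    intro P Q q hq
    exact hq g ⟨0, ElementaryHomotopyData.Lambda0.ofS g hg⟩
  have sq : CommSq (𝟙 A) (T.η.app A) (terminal.from A) (terminal.from _) :=
    ⟨Subsingleton.elim _ _⟩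
  have hr : T.η.app A ≫ sq.lift = 𝟙 A := sq.fac_left
  have hb := hf (T.free.obj A)
  constructor
  · intro a b hab
    have h := congrArg (postcomp E X (T.η.app A)) hab
    rw [← precomp_postcomp, ← precomp_postcomp] at h
    have h' := congrArg (postcomp E Y sq.lift) (hb.1 h)
    rwa [postcomp_retract E _ _ hr, postcomp_retract E _ _ hr] at h'
  · intro a
    obtain ⟨b, hbb⟩ := hb.2 (postcomp E X (T.η.app A) a)
    refine ⟨postcomp E Y sq.lift b, ?_⟩
    refine (precomp_postcomp E f sq.lift b).trans ?_
    refine (congrArg (postcomp E X sq.lift) hbb).trans ?_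
    exact postcomp_retract E _ _ hr a

end PaperMSMonad
end

section
/- Let 𝒞 be a small category, (−⊗I) elementary homotopy data on Psh(𝒞), and T a monad on Psh(𝒞) satisfying (M1)–(M3). For any maps f, g : X → Y of presheaves, if there is a homotopy θ : X⊗I → Y from f to g, then there is a homotopy TX⊗I → TY from Tf to Tg. -/
open CategoryTheory Category Limits

universe w v u

namespace PaperMSMonad

open CategoryTheory Category Limits

section Helpers

variable {D : Type*} [Category D]

lemma llp_isWeaklySaturated (S : MorphismProperty D) : IsWeaklySaturated.{w} S.llp := by
  refine ⟨?_, ?_, ?_, ?_⟩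
  · intro X Y f hf A B p _
    infer_instance
  · intro Z X Y P t f g b sq hf
    exact MorphismProperty.of_isPushout (P := S.llp) sq hf
  · intro X Y Z W' f g ⟨i, r, i', r', h1, h2, h3, h4⟩ hg
    exact MorphismProperty.of_retract (P := S.llp)
      { i := Arrow.homMk i i' h3
        r := Arrow.homMk r r' h4.symm
        retract := by ext <;> simp [h1, h2] } hg
  · intro J _ _ _ _ F hsucc hlim c hc
    have : F.IsWellOrderContinuous := ⟨fun m hm => hlim m hm⟩
    have h : S.llp.TransfiniteCompositionOfShape J (c.ι.app ⊥) :=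
      { F := F
        isoBot := Iso.refl _
        incl := c.ι
        isColimit := hc.some
        fac := by simp
        map_mem := hsucc }
    exact MorphismProperty.transfiniteCompositionsOfShape_le S.llp J _ ⟨h⟩

end Helpers

section Adj

variable {C : Type u} [SmallCategory C] (E : ElementaryHomotopyData C)
  {R : Psh C ⥤ Psh C} (adj : E.cyl ⊣ R)

/-- Evaluation of a path at an endpoint. -/
def ev (d : 𝟭 (Psh C) ⟶ E.cyl) (A : Psh C) : R.obj A ⟶ A :=
  d.app (R.obj A) ≫ adj.counit.app A

lemma ev_nat (d : 𝟭 (Psh C) ⟶ E.cyl) {A B : Psh C} (p : A ⟶ B) :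
    R.map p ≫ ev E adj d B = ev E adj d A ≫ p := by
  have h := d.naturality (R.map p)
  have h2 := adj.counit.naturality p
  dsimp at h h2
  simp only [ev, Category.assoc, ← h2]
  rw [reassoc_of% h]

lemma comp_ev (d : 𝟭 (Psh C) ⟶ E.cyl) {K A : Psh C} (k : K ⟶ R.obj A) :
    k ≫ ev E adj d A = d.app K ≫ (adj.homEquiv K A).symm k := by
  have h := d.naturality k
  dsimp at h
  simp only [ev, adj.homEquiv_counit]
  rw [reassoc_of% h]

lemma homEquiv_ev (d : 𝟭 (Psh C) ⟶ E.cyl) {K A : Psh C} (k : E.cyl.obj K ⟶ A) :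
    adj.homEquiv K A k ≫ ev E adj d A = d.app K ≫ k := by
  rw [comp_ev, Equiv.symm_apply_apply]

/-- Evaluation at both endpoints. -/
noncomputable def ev2 (A : Psh C) : R.obj A ⟶ A ⨯ A :=
  prod.lift (ev E adj E.d0 A) (ev E adj E.d1 A)

/-- The pullback-hom of `p` with the boundary inclusion. -/
noncomputable def phat {A B : Psh C} (p : A ⟶ B) :
    R.obj A ⟶ pullback (ev2 E adj B) (prod.map p p) :=
  pullback.lift (R.map p) (ev2 E adj A) (by
    ext1 <;> simp [ev2, ev_nat])

lemma phat_fst {A B : Psh C} (p : A ⟶ B) :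
    phat E adj p ≫ pullback.fst _ _ = R.map p := pullback.lift_fst _ _ _

lemma phat_snd {A B : Psh C} (p : A ⟶ B) :
    phat E adj p ≫ pullback.snd _ _ = ev2 E adj A := pullback.lift_snd _ _ _

lemma ev2_fst (A : Psh C) : ev2 E adj A ≫ prod.fst = ev E adj E.d0 A := prod.lift_fst _ _

lemma ev2_snd (A : Psh C) : ev2 E adj A ≫ prod.snd = ev E adj E.d1 A := prod.lift_snd _ _

lemma phat_lift_of_gluing {A B K L : Psh C} (p : A ⟶ B) (j : K ⟶ L)
    (h : HasLiftingProperty (E.gluingBoth j) p) : HasLiftingProperty j (phat E adj p) := by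
  constructor
  intro u v sq
  have hw := sq.w
  obtain ⟨b, hb⟩ : ∃ b, b = v ≫ pullback.fst _ _ := ⟨_, rfl⟩
  obtain ⟨a0, ha0⟩ : ∃ a0, a0 = v ≫ pullback.snd _ _ ≫ prod.fst := ⟨_, rfl⟩
  obtain ⟨a1, ha1⟩ : ∃ a1, a1 = v ≫ pullback.snd _ _ ≫ prod.snd := ⟨_, rfl⟩
  have e1 : u ≫ R.map p = j ≫ b := by
    rw [hb, ← reassoc_of% hw, phat_fst]
  have e2 : u ≫ ev E adj E.d0 A = j ≫ a0 := by
    rw [ha0, ← reassoc_of% hw, ← Category.assoc (phat E adj p), phat_snd, ev2_fst]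
  have e3 : u ≫ ev E adj E.d1 A = j ≫ a1 := by
    rw [ha1, ← reassoc_of% hw, ← Category.assoc (phat E adj p), phat_snd, ev2_snd]
  have e4 : b ≫ ev E adj E.d0 B = a0 ≫ p := by
    rw [hb, ha0, ← ev2_fst, Category.assoc, pullback.condition_assoc]
    simp
  have e5 : b ≫ ev E adj E.d1 B = a1 ≫ p := by
    rw [hb, ha1, ← ev2_snd, Category.assoc, pullback.condition_assoc]
    simp
  rw [comp_ev] at e2 e3 e4 e5
  have hd : coprod.desc (E.d0.app K) (E.d1.app K) ≫ (adj.homEquiv K A).symm u =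
      coprod.map j j ≫ coprod.desc a0 a1 := by
    apply coprod.hom_ext
    · simp only [coprod.inl_desc_assoc, coprod.inl_map_assoc, coprod.inl_desc, e2]
    · simp only [coprod.inr_desc_assoc, coprod.inr_map_assoc, coprod.inr_desc, e3]
  have sq' : CommSq (pushout.desc ((adj.homEquiv K A).symm u) (coprod.desc a0 a1) hd)
      (E.gluingBoth j) p ((adj.homEquiv L B).symm b) := by
    constructor
    apply pushout.hom_ext
    · rw [pushout.inl_desc_assoc, ElementaryHomotopyData.gluingBoth, pushout.inl_desc_assoc,
        ← adj.homEquiv_naturality_left_symm, ← adj.homEquiv_naturality_right_symm, e1]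
    · rw [pushout.inr_desc_assoc, ElementaryHomotopyData.gluingBoth, pushout.inr_desc_assoc]
      apply coprod.hom_ext
      · rw [coprod.inl_desc_assoc, coprod.inl_desc_assoc, e4]
      · rw [coprod.inr_desc_assoc, coprod.inr_desc_assoc, e5]
  have : sq'.HasLift := h.sq_hasLift sq'
  have fl := sq'.fac_left
  have fr := sq'.fac_right
  generalize sq'.lift = l at fl fr
  have f1 : E.cyl.map j ≫ l = (adj.homEquiv K A).symm u := by
    have := congrArg (fun k => pushout.inl _ _ ≫ k) fl
    simpa only [ElementaryHomotopyData.gluingBoth, pushout.inl_desc_assoc, pushout.inl_desc]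
      using this
  have f2 : coprod.desc (E.d0.app L) (E.d1.app L) ≫ l = coprod.desc a0 a1 := by
    have := congrArg (fun k => pushout.inr _ _ ≫ k) fl
    simp only [ElementaryHomotopyData.gluingBoth, pushout.inr_desc_assoc, pushout.inr_desc]
      at this
    exact this
  have f20 : E.d0.app L ≫ l = a0 := by
    simpa only [coprod.inl_desc_assoc, coprod.inl_desc] using
      congrArg (fun k => coprod.inl ≫ k) f2
  have f21 : E.d1.app L ≫ l = a1 := by
    simpa only [coprod.inr_desc_assoc, coprod.inr_desc] using
      congrArg (fun k => coprod.inr ≫ k) f2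
  refine ⟨⟨⟨adj.homEquiv L A l, ?_, ?_⟩⟩⟩
  · rw [← adj.homEquiv_naturality_left, f1, Equiv.apply_symm_apply]
  · apply pullback.hom_ext
    · rw [Category.assoc, phat_fst, ← adj.homEquiv_naturality_right, fr,
        Equiv.apply_symm_apply, hb]
    · rw [Category.assoc, phat_snd]
      apply Limits.prod.hom_ext
      · rw [Category.assoc, ev2_fst, homEquiv_ev, Category.assoc, ← ha0]
        exact f20
      · rw [Category.assoc, ev2_snd, homEquiv_ev, Category.assoc, ← ha1]
        exact f21

lemma gluing_lift_of_phat {A B K L : Psh C} (p : A ⟶ B) (j : K ⟶ L)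
    (h : HasLiftingProperty j (phat E adj p)) : HasLiftingProperty (E.gluingBoth j) p := by
  constructor
  intro u v sq
  have hw := sq.w
  obtain ⟨a, ha⟩ : ∃ a, a = pushout.inl _ _ ≫ u := ⟨_, rfl⟩
  obtain ⟨a0, ha0⟩ : ∃ a0, a0 = coprod.inl ≫ pushout.inr _ _ ≫ u := ⟨_, rfl⟩
  obtain ⟨a1, ha1⟩ : ∃ a1, a1 = coprod.inr ≫ pushout.inr _ _ ≫ u := ⟨_, rfl⟩
  have e1 : a ≫ p = E.cyl.map j ≫ v := by
    rw [ha, Category.assoc, hw, ElementaryHomotopyData.gluingBoth, pushout.inl_desc_assoc]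
  have e2 : E.d0.app K ≫ a = j ≫ a0 := by
    have := congrArg (fun k => coprod.inl ≫ k ≫ u)
      (pushout.condition (f := coprod.desc (E.d0.app K) (E.d1.app K)) (g := coprod.map j j))
    simpa only [Category.assoc, coprod.inl_desc_assoc, coprod.inl_map_assoc, ← ha, ← ha0]
      using this
  have e3 : E.d1.app K ≫ a = j ≫ a1 := by
    have := congrArg (fun k => coprod.inr ≫ k ≫ u)
      (pushout.condition (f := coprod.desc (E.d0.app K) (E.d1.app K)) (g := coprod.map j j))
    simpa only [Category.assoc, coprod.inr_desc_assoc, coprod.inr_map_assoc, ← ha, ← ha1]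
      using this
  have e4 : E.d0.app L ≫ v = a0 ≫ p := by
    rw [ha0, Category.assoc, Category.assoc, hw, ElementaryHomotopyData.gluingBoth,
      pushout.inr_desc_assoc, coprod.inl_desc_assoc]
  have e5 : E.d1.app L ≫ v = a1 ≫ p := by
    rw [ha1, Category.assoc, Category.assoc, hw, ElementaryHomotopyData.gluingBoth,
      pushout.inr_desc_assoc, coprod.inr_desc_assoc]
  have hd : adj.homEquiv L B v ≫ ev2 E adj B = prod.lift a0 a1 ≫ prod.map p p := by
    apply Limits.prod.hom_ext
    · rw [Category.assoc, ev2_fst, homEquiv_ev, prod.lift_map, prod.lift_fst]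
      exact e4
    · rw [Category.assoc, ev2_snd, homEquiv_ev, prod.lift_map, prod.lift_snd]
      exact e5
  have sq' : CommSq (adj.homEquiv K A a) j (phat E adj p)
      (pullback.lift (adj.homEquiv L B v) (prod.lift a0 a1) hd) := by
    constructor
    apply pullback.hom_ext
    · rw [Category.assoc, phat_fst, Category.assoc, pullback.lift_fst,
        ← adj.homEquiv_naturality_left, ← adj.homEquiv_naturality_right, e1]
    · rw [Category.assoc, phat_snd, Category.assoc, pullback.lift_snd]
      apply Limits.prod.hom_ext
      · rw [Category.assoc, ev2_fst, homEquiv_ev, Category.assoc, prod.lift_fst]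
        exact e2
      · rw [Category.assoc, ev2_snd, homEquiv_ev, Category.assoc, prod.lift_snd]
        exact e3
  have : sq'.HasLift := h.sq_hasLift sq'
  have fl := sq'.fac_left
  have fr := sq'.fac_right
  generalize sq'.lift = l at fl fr
  have f1 : l ≫ R.map p = adj.homEquiv L B v := by
    have := congrArg (fun k => k ≫ pullback.fst _ _) fr
    simpa only [Category.assoc, phat_fst, pullback.lift_fst] using this
  have f2 : l ≫ ev2 E adj A = prod.lift a0 a1 := by
    have := congrArg (fun k => k ≫ pullback.snd _ _) fr
    simpa only [Category.assoc, phat_snd, pullback.lift_snd] using this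
  have f20 : E.d0.app L ≫ (adj.homEquiv L A).symm l = a0 := by
    have := congrArg (fun k => k ≫ prod.fst) f2
    simpa only [Category.assoc, ev2_fst, comp_ev, prod.lift_fst] using this
  have f21 : E.d1.app L ≫ (adj.homEquiv L A).symm l = a1 := by
    have := congrArg (fun k => k ≫ prod.snd) f2
    simpa only [Category.assoc, ev2_snd, comp_ev, prod.lift_snd] using this
  refine ⟨⟨⟨(adj.homEquiv L A).symm l, ?_, ?_⟩⟩⟩
  · apply pushout.hom_ext
    · rw [ElementaryHomotopyData.gluingBoth, pushout.inl_desc_assoc,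
        ← adj.homEquiv_naturality_left_symm, fl, Equiv.symm_apply_apply, ha]
    · rw [ElementaryHomotopyData.gluingBoth, pushout.inr_desc_assoc]
      apply coprod.hom_ext
      · rw [coprod.inl_desc_assoc, ← ha0]
        exact f20
      · rw [coprod.inr_desc_assoc, ← ha1]
        exact f21
  · rw [← adj.homEquiv_naturality_right_symm, f1, Equiv.symm_apply_apply]

end Adj

/-- Lemma: under (M1)-(M3), `T` preserves the homotopy relation: a homotopy from `f` to `g`
yields a homotopy from `Tf` to `Tg`. -/
theorem monad_preserves_homotopy {C : Type u} [SmallCategory C]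
    (E : ElementaryHomotopyData C) (T : Monad (Psh C))
    (hM1a : ∀ ⦃K L : Psh C⦄ (j : K ⟶ L), CategoryTheory.Mono j →
      CategoryTheory.Mono (T.toFunctor.map j))
    (hM1b : ∀ X : Psh C, CategoryTheory.Mono (T.η.app X))
    {ι : Type u} (G : ι → Psh C)
    (hM2 : ∀ X : Psh C, SaturatedClassGen.{u} (unitsOf T G) (T.η.app X))
    (hM3 : ∀ A : T.Algebra, E.NaivelyFibrant (unitsOf T G) A.A)
    {X Y : Psh C} (f g : X ⟶ Y) (h : E.Htpy f g) :
    E.Htpy (T.toFunctor.map f) (T.toFunctor.map g) := by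
  obtain ⟨θ, h0, h1⟩ := h
  have := E.preservesColimits
  have : E.cyl.IsLeftAdjoint := Presheaf.isLeftAdjoint_of_preservesColimits.{u} E.cyl
  let adj := Adjunction.ofIsLeftAdjoint E.cyl
  let S : MorphismProperty (Psh C) := fun P Q q =>
    ∃ (A B : Psh C) (p : A ⟶ B) (_ : RLP (E.Lambda (unitsOf T G)) p),
      Nonempty (Arrow.mk q ≅ Arrow.mk (phat E adj p))
  have key : S.llp (T.η.app X) := by
    refine hM2 X _ (llp_isWeaklySaturated S) ?_
    rintro _ _ _ ⟨i⟩ P Q q ⟨A, B, p, hp, ⟨e⟩⟩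
    have := phat_lift_of_gluing E adj p (T.η.app (G i))
      (hp _ ⟨1, .glue _ (.ofS _ ⟨i⟩)⟩)
    exact HasLiftingProperty.of_arrow_iso_right _ e.symm
  have hA : E.Anodyne (unitsOf T G) (E.gluingBoth (T.η.app X)) := by
    intro A B p hp
    exact gluing_lift_of_phat E adj p _ (key _ ⟨A, B, p, hp, ⟨Iso.refl _⟩⟩)
  have := hM3 (T.free.obj Y) _ hA
  have n0 := T.η.naturality f
  have n1 := T.η.naturality g
  dsimp at n0 n1
  have hw : coprod.desc (E.d0.app X) (E.d1.app X) ≫ θ ≫ T.η.app Y =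
      coprod.map (T.η.app X) (T.η.app X) ≫ coprod.desc (T.map f) (T.map g) := by
    apply coprod.hom_ext
    · simp only [coprod.inl_desc_assoc, coprod.inl_map_assoc, coprod.inl_desc]
      rw [reassoc_of% h0, n0]
    · simp only [coprod.inr_desc_assoc, coprod.inr_map_assoc, coprod.inr_desc]
      rw [reassoc_of% h1, n1]
  have sq : CommSq (pushout.desc (θ ≫ T.η.app Y) (coprod.desc (T.map f) (T.map g)) hw)
      (E.gluingBoth (T.η.app X)) (terminal.from (T.free.obj Y).A) (terminal.from _) :=
    ⟨Subsingleton.elim _ _⟩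
  have : sq.HasLift := this.sq_hasLift sq
  have hl := sq.fac_left
  have hr : coprod.desc (E.d0.app (T.obj X)) (E.d1.app (T.obj X)) ≫ sq.lift =
      coprod.desc (T.map f) (T.map g) := by
    have := congrArg (fun k => pushout.inr _ _ ≫ k) hl
    simp only [ElementaryHomotopyData.gluingBoth, pushout.inr_desc_assoc, pushout.inr_desc]
      at this
    exact this
  refine ⟨sq.lift, ?_, ?_⟩
  · have := congrArg (fun k => coprod.inl ≫ k) hr
    simp only [coprod.inl_desc_assoc] at this
    exact this.trans (coprod.inl_desc _ _)
  · have := congrArg (fun k => coprod.inr ≫ k) hr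
    simp only [coprod.inr_desc_assoc] at this
    exact this.trans (coprod.inr_desc _ _)


end PaperMSMonad
end

section
/- Let 𝒞 be a small category, (−⊗I) elementary homotopy data on Psh(𝒞), and T a monad on Psh(𝒞) satisfying (M1)–(M3). Let (A, α : TA → A) be a T-algebra and f, g : X → A maps with f ≃ g (there is a homotopy from f to g). Then the induced T-algebra homomorphisms f' = α ∘ Tf and g' = α ∘ Tg : TX → A satisfy f' ≃ g'. -/
open CategoryTheory Category Limits

universe w v u

namespace PaperMSMonad

open CategoryTheory Category Limits

/-- The class of maps with the left lifting property against a fixed map is weakly saturated. -/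
theorem isWeaklySaturated_llp_single {D : Type*} [Category D] {Y Z : D} (q : Y ⟶ Z) :
    IsWeaklySaturated.{w} (fun _ _ j => HasLiftingProperty j q : MorphismProperty D) := by
  refine ⟨fun X Y f hf => ?_, fun Z X Y P t f g b sq hf => ?_, fun X Y Z W' f g hr hg => ?_, ?_⟩
  · infer_instance
  · exact sq.hasLiftingProperty q
  · obtain ⟨i, r, i', r', h1, h2, h3, h4⟩ := hr
    refine ⟨fun {a b} sq => ?_⟩
    have sq' : CommSq (r ≫ a) g q (r' ≫ b) := ⟨by
      rw [Category.assoc, sq.w, ← Category.assoc, ← h4, Category.assoc]⟩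
    have := hg.sq_hasLift sq'
    refine ⟨⟨⟨i' ≫ sq'.lift, ?_, ?_⟩⟩⟩
    · rw [← Category.assoc, ← h3, Category.assoc, sq'.fac_left, ← Category.assoc, h1,
        Category.id_comp]
    · rw [Category.assoc, sq'.fac_right, ← Category.assoc, h2, Category.id_comp]
  · intro J _ _ _ _ F hF hlim c hc
    obtain ⟨hc⟩ := hc
    have : F.IsWellOrderContinuous := ⟨fun m hm => hlim m hm⟩
    exact HasLiftingProperty.transfiniteComposition.hasLiftingProperty_ι_app_bot hc hF

/-- Lifting against the path-object map from lifting of the corner map against `A ⟶ 1`. -/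
theorem hasLiftingProperty_path {C : Type u} [SmallCategory C]
    (E : ElementaryHomotopyData C) {R : Psh C ⥤ Psh C} (adj : E.cyl ⊣ R)
    {A K L : Psh C} (j : K ⟶ L)
    (hj : HasLiftingProperty (E.gluingBoth j) (terminal.from A)) :
    HasLiftingProperty j (prod.lift (E.d0.app (R.obj A) ≫ adj.counit.app A)
      (E.d1.app (R.obj A) ≫ adj.counit.app A)) := by
  refine ⟨fun {a b} sq => ?_⟩
  have n0 : ∀ {K : Psh C} (a : K ⟶ R.obj A), a ≫ E.d0.app (R.obj A) ≫ adj.counit.app A =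
      E.d0.app K ≫ E.cyl.map a ≫ adj.counit.app A := fun a => by
    rw [← Category.assoc, ← Category.assoc]
    exact congrArg (· ≫ adj.counit.app A) (E.d0.naturality a)
  have n1 : ∀ {K : Psh C} (a : K ⟶ R.obj A), a ≫ E.d1.app (R.obj A) ≫ adj.counit.app A =
      E.d1.app K ≫ E.cyl.map a ≫ adj.counit.app A := fun a => by
    rw [← Category.assoc, ← Category.assoc]
    exact congrArg (· ≫ adj.counit.app A) (E.d1.naturality a)
  have w0 : E.d0.app K ≫ E.cyl.map a ≫ adj.counit.app A = j ≫ b ≫ prod.fst := by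
    rw [← n0, ← Category.assoc j, ← sq.w, Category.assoc, prod.lift_fst]
  have w1 : E.d1.app K ≫ E.cyl.map a ≫ adj.counit.app A = j ≫ b ≫ prod.snd := by
    rw [← n1, ← Category.assoc j, ← sq.w, Category.assoc, prod.lift_snd]
  let u : pushout (coprod.desc (E.d0.app K) (E.d1.app K)) (coprod.map j j) ⟶ A :=
    pushout.desc (E.cyl.map a ≫ adj.counit.app A)
      (coprod.desc (b ≫ prod.fst) (b ≫ prod.snd)) (by
        apply coprod.hom_ext
        · rw [coprod.inl_desc_assoc, coprod.inl_map_assoc, coprod.inl_desc]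
          exact w0
        · rw [coprod.inr_desc_assoc, coprod.inr_map_assoc, coprod.inr_desc]
          exact w1)
  have sq' : CommSq u (E.gluingBoth j) (terminal.from A) (terminal.from _) :=
    ⟨Subsingleton.elim _ _⟩
  have := hj.sq_hasLift sq'
  have hl : E.cyl.map j ≫ sq'.lift = E.cyl.map a ≫ adj.counit.app A := by
    have h := congrArg (pushout.inl _ _ ≫ ·) sq'.fac_left
    simpa only [ElementaryHomotopyData.gluingBoth, pushout.inl_desc_assoc, u,
      pushout.inl_desc] using h
  have hr : coprod.desc (E.d0.app L) (E.d1.app L) ≫ sq'.lift =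
      coprod.desc (b ≫ prod.fst) (b ≫ prod.snd) := by
    have h := congrArg (pushout.inr _ _ ≫ ·) sq'.fac_left
    simp only [ElementaryHomotopyData.gluingBoth, pushout.inr_desc_assoc, u,
      pushout.inr_desc] at h
    exact h
  have hr0 : E.d0.app L ≫ sq'.lift = b ≫ prod.fst := by
    have h := congrArg (coprod.inl ≫ ·) hr
    simpa only [coprod.inl_desc_assoc, coprod.inl_desc] using h
  have hr1 : E.d1.app L ≫ sq'.lift = b ≫ prod.snd := by
    have h := congrArg (coprod.inr ≫ ·) hr
    simpa only [coprod.inr_desc_assoc, coprod.inr_desc] using h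
  have ht : E.cyl.map (adj.homEquiv L A sq'.lift) ≫ adj.counit.app A = sq'.lift :=
    (adj.homEquiv_counit _ _ _).symm.trans ((adj.homEquiv L A).symm_apply_apply _)
  refine ⟨⟨⟨adj.homEquiv L A sq'.lift, ?_, ?_⟩⟩⟩
  · rw [← adj.homEquiv_naturality_left, hl]
    exact (congrArg (adj.homEquiv K A) (adj.homEquiv_counit _ _ _).symm).trans
      ((adj.homEquiv K A).apply_symm_apply a)
  · apply Limits.prod.hom_ext
    · rw [Category.assoc, prod.lift_fst, n0, ht, hr0]
    · rw [Category.assoc, prod.lift_snd, n1, ht, hr1]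

/-- Corollary: under (M1)-(M3), if `f ≃ g : X ⟶ A` for a `T`-algebra `(A, α)`, then the
induced `T`-algebra homomorphisms `α ∘ Tf` and `α ∘ Tg : TX ⟶ A` are homotopic. -/
theorem induced_algebra_homs_homotopic {C : Type u} [SmallCategory C]
    (E : ElementaryHomotopyData C) (T : Monad (Psh C))
    (hM1a : ∀ ⦃K L : Psh C⦄ (j : K ⟶ L), CategoryTheory.Mono j →
      CategoryTheory.Mono (T.toFunctor.map j))
    (hM1b : ∀ X : Psh C, CategoryTheory.Mono (T.η.app X))
    {ι : Type u} (G : ι → Psh C)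
    (hM2 : ∀ X : Psh C, SaturatedClassGen.{u} (unitsOf T G) (T.η.app X))
    (hM3 : ∀ A : T.Algebra, E.NaivelyFibrant (unitsOf T G) A.A)
    (A : T.Algebra) {X : Psh C} (f g : X ⟶ A.A) (h : E.Htpy f g) :
    E.Htpy (T.toFunctor.map f ≫ A.a) (T.toFunctor.map g ≫ A.a) := by
  obtain ⟨θ, h0, h1⟩ := h
  have := E.preservesColimits
  have hL : E.cyl.IsLeftAdjoint := Presheaf.isLeftAdjoint_of_preservesColimits.{u} E.cyl
  let adj := Adjunction.ofIsLeftAdjoint E.cyl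
  have key := hM2 X _ (isWeaklySaturated_llp_single (prod.lift
    (E.d0.app (E.cyl.rightAdjoint.obj A.A) ≫ adj.counit.app A.A)
    (E.d1.app (E.cyl.rightAdjoint.obj A.A) ≫ adj.counit.app A.A))) (by
      intro K L j hj
      apply hasLiftingProperty_path E adj j
      refine hM3 A _ ?_
      intro P Q p hp
      exact hp _ ⟨1, ElementaryHomotopyData.LambdaStep.glue j
        (ElementaryHomotopyData.Lambda0.ofS j hj)⟩)
  have n0 : ∀ {K : Psh C} (a : K ⟶ E.cyl.rightAdjoint.obj A.A),
      a ≫ E.d0.app (E.cyl.rightAdjoint.obj A.A) ≫ adj.counit.app A.A =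
      E.d0.app K ≫ E.cyl.map a ≫ adj.counit.app A.A := fun a => by
    rw [← Category.assoc, ← Category.assoc]
    exact congrArg (· ≫ adj.counit.app A.A) (E.d0.naturality a)
  have n1 : ∀ {K : Psh C} (a : K ⟶ E.cyl.rightAdjoint.obj A.A),
      a ≫ E.d1.app (E.cyl.rightAdjoint.obj A.A) ≫ adj.counit.app A.A =
      E.d1.app K ≫ E.cyl.map a ≫ adj.counit.app A.A := fun a => by
    rw [← Category.assoc, ← Category.assoc]
    exact congrArg (· ≫ adj.counit.app A.A) (E.d1.naturality a)
  have ht : E.cyl.map (adj.homEquiv X A.A θ) ≫ adj.counit.app A.A = θ :=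
    (adj.homEquiv_counit _ _ _).symm.trans ((adj.homEquiv X A.A).symm_apply_apply _)
  have hu : ∀ k : X ⟶ A.A, T.η.app X ≫ T.toFunctor.map k ≫ A.a = k := fun k => by
    rw [← Category.assoc]
    erw [← T.η.naturality k]
    rw [Category.assoc, A.unit]
    exact Category.comp_id k
  have sq : CommSq (adj.homEquiv X A.A θ) (T.η.app X) (prod.lift
      (E.d0.app (E.cyl.rightAdjoint.obj A.A) ≫ adj.counit.app A.A)
      (E.d1.app (E.cyl.rightAdjoint.obj A.A) ≫ adj.counit.app A.A))
      (prod.lift (T.toFunctor.map f ≫ A.a) (T.toFunctor.map g ≫ A.a)) := ⟨by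
    apply Limits.prod.hom_ext
    · rw [Category.assoc, Category.assoc, prod.lift_fst, prod.lift_fst, hu]
      exact (n0 _).trans ((congrArg (E.d0.app X ≫ ·) ht).trans h0)
    · rw [Category.assoc, Category.assoc, prod.lift_snd, prod.lift_snd, hu]
      exact (n1 _).trans ((congrArg (E.d1.app X ≫ ·) ht).trans h1)⟩
  have := key.sq_hasLift sq
  refine ⟨E.cyl.map sq.lift ≫ adj.counit.app A.A, ?_, ?_⟩
  · have h := congrArg (· ≫ prod.fst) sq.fac_right
    simp only [Category.assoc, prod.lift_fst] at h
    exact (n0 _).symm.trans h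
  · have h := congrArg (· ≫ prod.snd) sq.fac_right
    simp only [Category.assoc, prod.lift_snd] at h
    exact (n1 _).symm.trans h

end PaperMSMonad
end
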